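/- arXiv:2309.02225 — 6 statements merged into one kernel-verified Lean document; each statement's English description precedes it below -/
import Mathlib

section
/- Fix integers d ≥ 2 and k ≥ 0, and a word w ∈ Σ^k. For each n ≥ d+1, let G_{d,n} be a digraph drawn uniformly at random from the (finite, nonempty) set of all d-regular digraphs on {1,…,n}, with random adjacency matrix A_{d,n}. Then (1/n)·E[Tr(A_{d,n}^w)] converges to M_d(w) as n → ∞. -/
/- Σ = {1,*} is encoded as `Bool`: `true` is the letter `1`, `false` is the letter `*`. -/

/-- The generator `g_i^{w}` in the free group `F_d`: `g_i` if the letter is `1` (`true`),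
and `g_i⁻¹` if the letter is `*` (`false`). -/
def gens (d : ℕ) (b : Bool) (i : Fin d) : FreeGroup (Fin d) :=
  if b then FreeGroup.of i else (FreeGroup.of i)⁻¹

/-- The product `g_{i_1}^{w_1} ⋯ g_{i_k}^{w_k}` in the free group `F_d`. -/
def wprod {d k : ℕ} (w : Fin k → Bool) (i : Fin k → Fin d) : FreeGroup (Fin d) :=
  (List.ofFn fun t => gens d (w t) (i t)).prod

/-- `Mword d w` is the number of `w`-paths: tuples `(i_1,…,i_k) ∈ [d]^k` with
`g_{i_1}^{w_1} ⋯ g_{i_k}^{w_k} = 1` in `F_d`. -/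
noncomputable def Mword (d : ℕ) {k : ℕ} (w : Fin k → Bool) : ℕ :=
  Nat.card {i : Fin k → Fin d // wprod w i = 1}

/-- `A^w := A^{w_1} ⋯ A^{w_k}` where `A^1 := A` and `A^* := Aᵀ`. -/
def wMat {V : Type*} [Fintype V] [DecidableEq V] (A : Matrix V V ℕ) {k : ℕ}
    (w : Fin k → Bool) : Matrix V V ℕ :=
  (List.ofFn fun t => if w t then A else A.transpose).prod

/-- A digraph on `Fin n`, given by `B i j = true` iff there is an arc `i → j`,
is `d`-regular: no loops, out-degrees and in-degrees all equal to `d`. -/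
def IsRegB (d n : ℕ) (B : Fin n → Fin n → Bool) : Prop :=
  (∀ i, B i i = false) ∧
  (∀ i, (Finset.univ.filter fun j => B i j = true).card = d) ∧
  (∀ j, (Finset.univ.filter fun i => B i j = true).card = d)

open Classical in
/-- The (finite) set of all `d`-regular digraphs on `{1,…,n}`. -/
noncomputable def regDigraphs (d n : ℕ) : Finset (Fin n → Fin n → Bool) :=
  Finset.univ.filter (IsRegB d n)

/-- Adjacency matrix (with `ℕ` entries) of a digraph. -/
def adjB {n : ℕ} (B : Fin n → Fin n → Bool) : Matrix (Fin n) (Fin n) ℕ :=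
  fun i j => if B i j then 1 else 0


namespace StarMom

open Finset

variable {n d : ℕ}

def nb (B : Fin n → Fin n → Bool) (S : Finset (Fin n)) : Finset (Fin n) :=
  S ∪ S.biUnion (fun x => univ.filter (fun y => B x y = true) ∪ univ.filter (fun y => B y x = true))

def ball (B : Fin n → Fin n → Bool) (v : Fin n) : ℕ → Finset (Fin n)
  | 0 => {v}
  | k + 1 => nb B (ball B v k)

lemma mem_nb {B : Fin n → Fin n → Bool} {S : Finset (Fin n)} {y : Fin n} :
    y ∈ nb B S ↔ y ∈ S ∨ ∃ x ∈ S, B x y = true ∨ B y x = true := by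
  simp [nb]

lemma ball_succ_sub (B : Fin n → Fin n → Bool) (v : Fin n) (k : ℕ) :
    ball B v k ⊆ ball B v (k+1) := by
  intro y hy
  exact mem_nb.2 (Or.inl hy)

lemma ball_mono (B : Fin n → Fin n → Bool) (v : Fin n) {k l : ℕ} (h : k ≤ l) :
    ball B v k ⊆ ball B v l := by
  induction h with
  | refl => exact fun _ h => h
  | step _ ih => exact ih.trans (ball_succ_sub B v _)

lemma card_ball {B : Fin n → Fin n → Bool} (hB : IsRegB d n B) (v : Fin n) (k : ℕ) :
    (ball B v k).card ≤ (2 * d + 1) ^ k := by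
  induction k with
  | zero => simp [ball]
  | succ k ih =>
    have h1 : (nb B (ball B v k)).card ≤ (ball B v k).card + (ball B v k).card * (2 * d) := by
      refine (card_union_le _ _).trans (Nat.add_le_add_left ?_ _)
      refine card_biUnion_le_card_mul _ _ _ fun x _ => ?_
      refine (card_union_le _ _).trans ?_
      rw [hB.2.1 x, hB.2.2 x]; omega
    calc (ball B v (k+1)).card ≤ (ball B v k).card + (ball B v k).card * (2 * d) := h1
      _ = (ball B v k).card * (2 * d + 1) := by ring
      _ ≤ (2 * d + 1) ^ k * (2 * d + 1) := Nat.mul_le_mul_right _ ih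
      _ = _ := by ring

def del (B : Fin n → Fin n → Bool) (p q : Fin n) : Fin n → Fin n → Bool :=
  fun x y => B x y && !decide (x = p ∧ y = q)

lemma del_iff {B : Fin n → Fin n → Bool} {p q x y : Fin n} :
    del B p q x y = true ↔ B x y = true ∧ ¬ (x = p ∧ y = q) := by
  simp [del]
  tauto

lemma ball_del_sub (B : Fin n → Fin n → Bool) (p q v : Fin n) (k : ℕ) :
    ball (del B p q) v k ⊆ ball B v k := by
  induction k with
  | zero => exact fun _ h => h
  | succ k ih =>
    intro y hy
    rcases mem_nb.1 hy with h | ⟨x, hx, h⟩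
    · exact mem_nb.2 (Or.inl (ih h))
    · refine mem_nb.2 (Or.inr ⟨x, ih hx, ?_⟩)
      simp only [del_iff] at h
      tauto

/-- `(v,p,q)` with an arc `p → q` both ends of which are close to `v` after deleting it -/
def Bad (B : Fin n → Fin n → Bool) (k : ℕ) (t : Fin n × Fin n × Fin n) : Prop :=
  B t.2.1 t.2.2 = true ∧ t.2.1 ∈ ball (del B t.2.1 t.2.2) t.1 k ∧
    t.2.2 ∈ ball (del B t.2.1 t.2.2) t.1 k

instance (B : Fin n → Fin n → Bool) (k : ℕ) : DecidablePred (Bad B k) := fun t => by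
  unfold Bad; infer_instance

def badT (B : Fin n → Fin n → Bool) (k : ℕ) : Finset (Fin n × Fin n × Fin n) :=
  univ.filter (Bad B k)

/-! Switching -/

def sw (p q c e : Fin n) (B : Fin n → Fin n → Bool) : Fin n → Fin n → Bool :=
  fun x y => if x = p ∨ x = c then B x (Equiv.swap q e y) else B x y

lemma sw_sw (p q c e : Fin n) (B : Fin n → Fin n → Bool) : sw p q c e (sw p q c e B) = B := by
  funext x y
  unfold sw
  by_cases h : x = p ∨ x = c <;> simp [h]

lemma sw_eq (p q c e : Fin n) (B : Fin n → Fin n → Bool)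
    (h1 : B p q = true) (h2 : B c e = true) (h3 : B p e = false) (h4 : B c q = false) (x y : Fin n) :
    sw p q c e B x y = if y = q ∨ y = e then B (Equiv.swap p c x) y else B x y := by
  have hpc : p ≠ c := by rintro rfl; simp_all
  have hqe : q ≠ e := by rintro rfl; simp_all
  unfold sw
  simp only [Equiv.swap_apply_def]
  grind

lemma sw_reg {p q c e : Fin n} {B : Fin n → Fin n → Bool} (hB : IsRegB d n B)
    (h1 : B p q = true) (h2 : B c e = true) (h3 : B p e = false) (h4 : B c q = false)
    (h5 : p ≠ e) (h6 : c ≠ q) : IsRegB d n (sw p q c e B) := by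
  refine ⟨fun i => ?_, fun i => ?_, fun j => ?_⟩
  · have hpq : p ≠ q := by rintro rfl; simp [hB.1] at h1
    have hce : c ≠ e := by rintro rfl; simp [hB.1] at h2
    have := hB.1 i
    unfold sw
    simp only [Equiv.swap_apply_def]
    grind
  · rw [← hB.2.1 i]
    by_cases h : i = p ∨ i = c
    · refine card_equiv (Equiv.swap q e) fun y => ?_
      simp [sw, h]
    · simp [sw, h]
  · rw [← hB.2.2 j]
    simp only [sw_eq p q c e B h1 h2 h3 h4]
    by_cases h : j = q ∨ j = e
    · refine card_equiv (Equiv.swap p c) fun y => ?_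
      simp [h]
    · simp [h]

lemma ball_sw {p q c e v : Fin n} {B : Fin n → Fin n → Bool} (k : ℕ)
    (hc : c ∉ ball B v k) (he : e ∉ ball B v k) (j : ℕ) (hj : j ≤ k)  :
    ball (del B p q) v j ⊆ ball (sw p q c e B) v j := by
  induction j with
  | zero => exact fun _ h => h
  | succ j ih =>
    have ih := ih (by omega)
    intro y hy
    rcases mem_nb.1 hy with h | ⟨x, hx, h⟩
    · exact mem_nb.2 (Or.inl (ih h))
    · refine mem_nb.2 (Or.inr ⟨x, ih hx, ?_⟩)
      have hxk := ball_mono B v (by omega : j ≤ k) (ball_del_sub B p q v j hx)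
      have hyk := ball_mono B v hj (ball_del_sub B p q v (j+1) hy)
      have a1 : x ≠ c := by rintro rfl; exact hc hxk
      have a2 : x ≠ e := by rintro rfl; exact he hxk
      have a3 : y ≠ c := by rintro rfl; exact hc hyk
      have a4 : y ≠ e := by rintro rfl; exact he hyk
      simp only [del_iff] at h
      unfold sw
      simp only [Equiv.swap_apply_def]
      grind

def farArcs (B : Fin n → Fin n → Bool) (v : Fin n) (k : ℕ) : Finset (Fin n × Fin n) :=
  univ.filter fun a => B a.1 a.2 = true ∧ a.1 ∉ ball B v (k+1) ∧ a.2 ∉ ball B v (k+1)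

lemma card_farArcs {B : Fin n → Fin n → Bool} (hB : IsRegB d n B) (v : Fin n) (k : ℕ) :
    n * d ≤ (farArcs B v k).card + 2 * d * (2 * d + 1) ^ (k+1) := by
  have e1 : (univ.filter fun a : Fin n × Fin n => B a.1 a.2 = true) ⊆
      farArcs B v k ∪ ((ball B v (k+1)).biUnion
        (fun c => (univ.filter fun e => B c e = true).image (fun e => (c, e))) ∪
        (ball B v (k+1)).biUnion
        (fun e => (univ.filter fun c => B c e = true).image (fun c => (c, e)))) := by
    rintro ⟨c, e⟩ h
    simp [farArcs] at h ⊢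
    tauto
  have e2 : (univ.filter fun a : Fin n × Fin n => B a.1 a.2 = true).card = n * d := by
    rw [card_filter, Fintype.sum_prod_type]
    simp only [← card_filter]
    simp [hB.2.1]
  have b := card_ball hB v (k+1)
  have e3 := card_biUnion_le_card_mul (ball B v (k+1))
    (fun c => (univ.filter fun e => B c e = true).image (fun e => (c, e))) d
    (fun c _ => card_image_le.trans (hB.2.1 c).le)
  have e4 := card_biUnion_le_card_mul (ball B v (k+1))
    (fun e => (univ.filter fun c => B c e = true).image (fun c => (c, e))) d
    (fun c _ => card_image_le.trans (hB.2.2 c).le)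
  have e5 := (card_le_card e1).trans ((card_union_le _ _).trans
    (Nat.add_le_add_left (card_union_le _ _) _))
  rw [e2] at e5
  nlinarith

lemma mem_reg {B : Fin n → Fin n → Bool} : B ∈ regDigraphs d n ↔ IsRegB d n B := by
  simp [regDigraphs]

lemma switching (d n k : ℕ) :
    (∑ B ∈ regDigraphs d n, (badT B k).card) * (n * d - 2 * d * (2 * d + 1) ^ (k+1)) ≤
      (regDigraphs d n).card * (n * (((2 * d + 1) ^ k) ^ 2 * d ^ 2)) := by
  classical
  let S : Finset ((_ : Fin n → Fin n → Bool) × (_ : Fin n × Fin n × Fin n) × (Fin n × Fin n)) :=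
    (regDigraphs d n).sigma fun B => (badT B k).sigma fun t => farArcs B t.1 k
  let T : Finset ((_ : Fin n → Fin n → Bool) × (_ : Fin n) × (_ : Fin n × Fin n) × (Fin n × Fin n)) :=
    (regDigraphs d n).sigma fun B => univ.sigma fun v => (ball B v k ×ˢ ball B v k).sigma
      fun pq => (univ.filter fun c => B c pq.2 = true) ×ˢ (univ.filter fun e => B pq.1 e = true)
  have hS : (∑ B ∈ regDigraphs d n, (badT B k).card) * (n * d - 2 * d * (2 * d + 1) ^ (k+1)) ≤
      S.card := by
    simp only [S, card_sigma, sum_mul]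
    refine sum_le_sum fun B hB => ?_
    rw [← smul_eq_mul]
    refine card_nsmul_le_sum _ _ _ fun t _ => ?_
    have := card_farArcs (mem_reg.1 hB) t.1 k
    omega
  have hT : T.card ≤ (regDigraphs d n).card * (n * (((2 * d + 1) ^ k) ^ 2 * d ^ 2)) := by
    simp only [T, card_sigma]
    rw [← smul_eq_mul]
    refine sum_le_card_nsmul _ _ _ fun B hB => ?_
    have hB := mem_reg.1 hB
    have : (n * (((2 * d + 1) ^ k) ^ 2 * d ^ 2)) =
      (univ : Finset (Fin n)).card • (((2 * d + 1) ^ k) ^ 2 * d ^ 2) := by simp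
    rw [this]
    refine sum_le_card_nsmul _ _ _ fun v _ => ?_
    simp only [card_product, hB.2.1, hB.2.2, sum_const, smul_eq_mul]
    have := card_ball hB v k
    rw [pow_two, pow_two d]
    gcongr
  refine hS.trans (le_trans ?_ hT)
  refine card_le_card_of_injOn
    (fun s => ⟨sw s.2.1.2.1 s.2.1.2.2 s.2.2.1 s.2.2.2 s.1, s.2.1.1, s.2.1.2, s.2.2⟩) ?_ ?_
  · rintro ⟨B, ⟨v, p, q⟩, c, e⟩ h
    simp only [S, T, badT, farArcs, Bad, coe_sigma, Set.mem_sigma_iff, mem_coe,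
      mem_filter, mem_univ, true_and, mem_product, mem_reg] at h ⊢
    obtain ⟨hB, ⟨hpq, hp, hq⟩, hce, hc, he⟩ := h
    have hp' := ball_del_sub B p q v k hp
    have hq' := ball_del_sub B p q v k hq
    have hc' : c ∉ ball B v k := fun h => hc (ball_succ_sub B v k h)
    have he' : e ∉ ball B v k := fun h => he (ball_succ_sub B v k h)
    have h3 : B p e = false := by
      by_contra h
      exact he (mem_nb.2 (Or.inr ⟨p, hp', Or.inl (by simpa using h)⟩))
    have h4 : B c q = false := by
      by_contra h
      exact hc (mem_nb.2 (Or.inr ⟨q, hq', Or.inr (by simpa using h)⟩))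
    refine ⟨sw_reg hB hpq hce h3 h4 ?_ ?_, ⟨ball_sw k hc' he' k le_rfl hp,
      ball_sw k hc' he' k le_rfl hq⟩, ?_, ?_⟩
    · rintro rfl; exact he' hp'
    · rintro rfl; exact hc' hq'
    · simp [sw, hce]
    · simp [sw, hpq]
  · rintro ⟨B, ⟨v, p, q⟩, c, e⟩ - ⟨B', ⟨v', p', q'⟩, c', e'⟩ - h
    simp only [Sigma.mk.injEq, heq_eq_eq, Prod.mk.injEq] at h
    obtain ⟨h, rfl, ⟨rfl, rfl⟩, rfl, rfl⟩ := h
    have := congrArg (sw p q c e) h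
    rw [sw_sw, sw_sw] at this
    subst this; rfl

end StarMom

namespace StarMom

open Finset

variable {n d : ℕ}

/-! Trajectories of reduced words -/

def stp (σ : Fin d → Equiv.Perm (Fin n)) (y : Fin d × Bool) : Equiv.Perm (Fin n) :=
  cond y.2 (σ y.1) (σ y.1)⁻¹

def act (σ : Fin d → Equiv.Perm (Fin n)) (v : Fin n) : List (Fin d × Bool) → Fin n
  | [] => v
  | y :: L => stp σ y (act σ v L)

lemma act_eq (σ : Fin d → Equiv.Perm (Fin n)) (v : Fin n) (L : List (Fin d × Bool)) :
    (L.map (stp σ)).prod v = act σ v L := by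
  induction L with
  | nil => rfl
  | cons y L ih => simp [act, ← ih]

def pts (σ : Fin d → Equiv.Perm (Fin n)) (v : Fin n) : List (Fin d × Bool) → Finset (Fin n)
  | [] => {v}
  | y :: L => insert (act σ v (y :: L)) (pts σ v L)

lemma act_mem (σ : Fin d → Equiv.Perm (Fin n)) (v : Fin n) (L : List (Fin d × Bool)) :
    act σ v L ∈ pts σ v L := by
  cases L <;> simp [act, pts]

lemma base_mem (σ : Fin d → Equiv.Perm (Fin n)) (v : Fin n) (L : List (Fin d × Bool)) :
    v ∈ pts σ v L := by
  induction L with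
  | nil => simp [pts]
  | cons y L ih => simp [pts, ih]

lemma pts_sub (σ : Fin d → Equiv.Perm (Fin n)) (B : Fin n → Fin n → Bool)
    (hσ : ∀ i z, B (σ i z) z = true) (v p q : Fin n) (L : List (Fin d × Bool))
    (h : ¬ (p ∈ pts σ v L ∧ q ∈ pts σ v L)) :
    pts σ v L ⊆ ball (del B p q) v L.length := by
  induction L with
  | nil => exact fun _ h => h
  | cons y L ih =>
    have h' : ¬ (p ∈ pts σ v L ∧ q ∈ pts σ v L) := by
      simp only [pts, mem_insert] at h; tauto
    have ih := ih h'
    intro z hz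
    simp only [pts, mem_insert] at hz
    rcases hz with rfl | hz
    · refine mem_nb.2 (Or.inr ⟨act σ v L, ih (act_mem σ v L), ?_⟩)
      have m1 : act σ v L ∈ pts σ v (y :: L) := mem_insert_of_mem (act_mem σ v L)
      have m2 := act_mem σ v (y :: L)
      simp only [del_iff]
      obtain ⟨i, b⟩ := y
      cases b
      · left
        refine ⟨?_, ?_⟩
        · have := hσ i ((σ i)⁻¹ (act σ v L))
          simpa [act, stp] using this
        · rintro ⟨rfl, rfl⟩; exact h ⟨m1, m2⟩
      · right
        refine ⟨?_, ?_⟩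
        · exact hσ i _
        · rintro ⟨rfl, rfl⟩; exact h ⟨m2, m1⟩
    · exact ball_succ_sub _ _ _ (ih hz)

lemma no_return (σ : Fin d → Equiv.Perm (Fin n)) (B : Fin n → Fin n → Bool)
    (hl : ∀ i, B i i = false)
    (hσ : ∀ i z, B (σ i z) z = true) (hinj : ∀ i j z, σ i z = σ j z → i = j) (v : Fin n) (k : ℕ)
    (hv : ∀ p q, ¬ Bad B k (v, p, q)) (L : List (Fin d × Bool)) :
    ∀ y, FreeGroup.IsReduced (y :: L) → L.length ≤ k → act σ v (y :: L) ∉ pts σ v L := by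
  have hσ' : ∀ i z, B z ((σ i)⁻¹ z) = true := fun i z => by
    simpa using hσ i ((σ i)⁻¹ z)
  induction L with
  | nil =>
    rintro ⟨i, b⟩ - - h
    simp only [pts, mem_singleton, act] at h
    cases b
    · have := hσ' i v
      simp only [stp, cond_false] at h
      rw [h, hl] at this; simp at this
    · have := hσ i v
      simp only [stp, cond_true] at h
      rw [h, hl] at this; simp at this
  | cons y' L ih =>
    intro y hred hlen hmem
    rw [FreeGroup.isReduced_cons_cons] at hred
    have hnot := ih y' hred.2 (by simp at hlen; omega)
    -- the arc used in the last step
    obtain ⟨p, q, hpq, harc⟩ : ∃ p q, B p q = true ∧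
        ((y.2 = true ∧ p = act σ v (y :: y' :: L) ∧ q = act σ v (y' :: L)) ∨
         (y.2 = false ∧ q = act σ v (y :: y' :: L) ∧ p = act σ v (y' :: L))) := by
      obtain ⟨i, b⟩ := y
      cases b
      · exact ⟨act σ v (y' :: L), act σ v ((i, false) :: y' :: L), hσ' i _, by simp⟩
      · exact ⟨act σ v ((i, true) :: y' :: L), act σ v (y' :: L), hσ i _, by simp⟩
    have hsub := pts_sub σ B hσ v p q L (by
      rintro ⟨h1, h2⟩
      rcases harc with ⟨_, _, rfl⟩ | ⟨_, _, rfl⟩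
      · exact hnot h2
      · exact hnot h1)
    have hne : act σ v (y' :: L) ≠ act σ v L := fun h => hnot (h ▸ act_mem σ v L)
    have hz : act σ v (y' :: L) ∈ ball (del B p q) v (L.length + 1) := by
      refine mem_nb.2 (Or.inr ⟨act σ v L, hsub (act_mem σ v L), ?_⟩)
      simp only [del_iff]
      obtain ⟨i, b⟩ := y
      obtain ⟨i', b'⟩ := y'
      cases b'
      · left
        refine ⟨hσ' i' _, ?_⟩
        rintro ⟨h1, h2⟩
        rcases harc with ⟨hb, h3, h4⟩ | ⟨hb, h3, h4⟩
        · simp only at hb; subst hb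
          have e1 : σ i (act σ v ((i', false) :: L)) = act σ v L := by rw [h1, h3]; rfl
          have e2 : σ i' (act σ v ((i', false) :: L)) = act σ v L := by simp [act, stp]
          have := hinj i i' _ (e1.trans e2.symm)
          simp [this] at hred
        · exact hne (by rw [← h4, ← h1])
      · right
        refine ⟨hσ i' _, ?_⟩
        rintro ⟨h1, h2⟩
        rcases harc with ⟨hb, h3, h4⟩ | ⟨hb, h3, h4⟩
        · exact hne (by rw [← h4, ← h2])
        · simp only at hb; subst hb
          have e1 : σ i (act σ v L) = act σ v ((i', true) :: L) := by
            rw [h2, h3]; simp [act, stp]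
          have e2 : σ i' (act σ v L) = act σ v ((i', true) :: L) := by simp [act, stp]
          have := hinj i i' _ (e1.trans e2.symm)
          simp [this] at hred
    have hall : pts σ v (y' :: L) ⊆ ball (del B p q) v k := by
      refine Finset.Subset.trans ?_ (ball_mono _ _ (by simpa using hlen : L.length + 1 ≤ k))
      intro x hx
      rcases mem_insert.1 hx with rfl | hx
      · exact hz
      · exact ball_succ_sub _ _ _ (hsub hx)
    have hm := act_mem σ v (y' :: L)
    refine hv p q ⟨hpq, ?_, ?_⟩
    · rcases harc with ⟨_, rfl, rfl⟩ | ⟨_, rfl, rfl⟩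
      · exact hall hmem
      · exact hall hm
    · rcases harc with ⟨_, rfl, rfl⟩ | ⟨_, rfl, rfl⟩
      · exact hall hm
      · exact hall hmem

lemma lift_ne (σ : Fin d → Equiv.Perm (Fin n)) (B : Fin n → Fin n → Bool)
    (hl : ∀ i, B i i = false)
    (hσ : ∀ i z, B (σ i z) z = true) (hinj : ∀ i j z, σ i z = σ j z → i = j) (v : Fin n) (k : ℕ)
    (hv : ∀ p q, ¬ Bad B k (v, p, q)) (x : FreeGroup (Fin d)) (hx : x ≠ 1) (hk : x.norm ≤ k) :
    FreeGroup.lift σ x v ≠ v := by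
  have e : FreeGroup.lift σ x v = act σ v x.toWord := by
    conv_lhs => rw [← FreeGroup.mk_toWord (x := x), FreeGroup.lift_mk]
    exact act_eq σ v _
  rw [e]
  have hr : FreeGroup.IsReduced x.toWord := FreeGroup.isReduced_toWord
  have hn : x.toWord ≠ [] := by simpa using hx
  unfold FreeGroup.norm at hk
  cases h : x.toWord with
  | nil => exact absurd h hn
  | cons y L =>
    rw [h] at hr hk
    intro h2
    have h3 := no_return σ B hl hσ hinj v k hv L y hr (by simp at hk; omega)
    rw [h2] at h3
    exact h3 (base_mem σ v L)

/-! Decomposition into permutations -/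

lemma decomp (d : ℕ) : ∀ (A : Fin n → Fin n → ℕ), (∀ u, ∑ v, A u v = d) → (∀ v, ∑ u, A u v = d) →
    ∃ σ : Fin d → Equiv.Perm (Fin n), ∀ u v, A u v = ∑ i, if u = σ i v then 1 else 0 := by
  induction d with
  | zero =>
    intro A h1 h2
    refine ⟨fun i => i.elim0, fun u v => ?_⟩
    have := h1 u
    simp at this ⊢
    exact this v
  | succ d ih =>
    intro A h1 h2
    let t : Fin n → Finset (Fin n) := fun v => univ.filter fun u => A u v ≠ 0
    have hall : ∀ s : Finset (Fin n), s.card ≤ (s.biUnion t).card := by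
      intro s
      have a1 : ∑ v ∈ s, ∑ u, A u v = s.card * (d+1) := by simp [h2]
      have a2 : ∑ u ∈ s.biUnion t, ∑ v, A u v = (s.biUnion t).card * (d+1) := by simp [h1]
      have a3 : ∑ v ∈ s, ∑ u, A u v ≤ ∑ u ∈ s.biUnion t, ∑ v, A u v := by
        calc ∑ v ∈ s, ∑ u, A u v = ∑ v ∈ s, ∑ u ∈ s.biUnion t, A u v := by
              refine sum_congr rfl fun v hv => ?_
              symm
              refine sum_subset (subset_univ _) fun u _ hu => ?_
              by_contra hne
              exact hu (mem_biUnion.2 ⟨v, hv, by simp [t, hne]⟩)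
          _ = ∑ u ∈ s.biUnion t, ∑ v ∈ s, A u v := sum_comm
          _ ≤ _ := sum_le_sum fun u _ => sum_le_sum_of_subset (subset_univ _)
      rw [a1, a2] at a3
      exact Nat.le_of_mul_le_mul_right a3 (by omega)
    obtain ⟨f, hf, hft⟩ := (Finset.all_card_le_biUnion_card_iff_exists_injective t).1 hall
    let τ : Equiv.Perm (Fin n) := Equiv.ofBijective f (Finite.injective_iff_bijective.1 hf)
    have hτ : ∀ v, A (τ v) v ≠ 0 := fun v => by
      have := hft v
      simp only [t, mem_filter, mem_univ, true_and] at this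
      exact this
    have hle : ∀ u v, (if u = τ v then 1 else 0) ≤ A u v := by
      intro u v
      split_ifs with h
      · subst h; exact Nat.one_le_iff_ne_zero.2 (hτ v)
      · exact Nat.zero_le _
    have s1 : ∀ u, ∑ v, (if u = τ v then 1 else 0) = 1 := by
      intro u
      have : ∀ v, (u = τ v) ↔ (v = τ.symm u) := fun v => by
        rw [Equiv.eq_symm_apply]; exact eq_comm
      simp [this]
    have s2 : ∀ v, ∑ u, (if u = τ v then 1 else 0) = 1 := by
      intro v; simp
    obtain ⟨σ, hσ⟩ := ih (fun u v => A u v - if u = τ v then 1 else 0)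
      (fun u => by
        rw [sum_tsub_distrib _ (fun v _ => hle u v), h1, s1]; rfl)
      (fun v => by
        rw [sum_tsub_distrib _ (fun u _ => hle u v), h2, s2]; rfl)
    refine ⟨Fin.cons τ σ, fun u v => ?_⟩
    rw [Fin.sum_univ_succ]
    simp only [Fin.cons_zero, Fin.cons_succ]
    rw [← hσ u v]
    have := hle u v
    omega

/-! Trace expansion -/

def pm (σ : Equiv.Perm (Fin n)) : Matrix (Fin n) (Fin n) ℕ := fun u v => if u = σ v then 1 else 0

def pmHom : Equiv.Perm (Fin n) →* Matrix (Fin n) (Fin n) ℕ where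
  toFun := pm
  map_one' := by ext u v; simp [pm, Matrix.one_apply]; rfl
  map_mul' σ τ := by
    ext u v
    simp [pm, Matrix.mul_apply]
    rfl

lemma pm_trace (σ : Equiv.Perm (Fin n)) :
    Matrix.trace (pm σ) = (univ.filter fun v => σ v = v).card := by
  rw [card_filter]
  simp only [Matrix.trace, pm, Matrix.diag_apply]
  refine sum_congr rfl fun v _ => ?_
  simp only [eq_comm]

lemma prod_sum_ofFn {R : Type*} [Semiring R] {d : ℕ} (k : ℕ) : ∀ f : Fin k → Fin d → R,
    (List.ofFn fun t => ∑ i, f t i).prod =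
      ∑ g : Fin k → Fin d, (List.ofFn fun t => f t (g t)).prod := by
  induction k with
  | zero => intro f; simp
  | succ k ih =>
    intro f
    rw [List.ofFn_succ, List.prod_cons, ih (fun t => f t.succ), sum_mul_sum, ← sum_product',
      univ_product_univ]
    refine Fintype.sum_equiv (Fin.consEquiv fun _ => Fin d) _ _ fun g => ?_
    simp [List.ofFn_succ, Fin.consEquiv]

lemma trace_eq {k : ℕ} (B : Fin n → Fin n → Bool) (σ : Fin d → Equiv.Perm (Fin n))
    (h : ∀ u v, adjB B u v = ∑ i, if u = σ i v then 1 else 0) (w : Fin k → Bool) :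
    Matrix.trace (wMat (adjB B) w) =
      ∑ i : Fin k → Fin d, (univ.filter fun v => FreeGroup.lift σ (wprod w i) v = v).card := by
  have e : ∀ t, (if w t then adjB B else (adjB B).transpose) =
      ∑ i, pmHom (FreeGroup.lift σ (gens d (w t) i)) := by
    intro t
    ext u v
    cases w t
    · simp only [Bool.false_eq_true, if_false, Matrix.transpose_apply, h, gens, map_inv,
        FreeGroup.lift_apply_of, Matrix.sum_apply]
      refine sum_congr rfl fun i _ => ?_
      change _ = pm _ u v
      simp only [pm]
      congr 1
      rw [Equiv.Perm.eq_inv_iff_eq]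
      exact propext eq_comm
    · simp only [if_true, h, gens, FreeGroup.lift_apply_of, Matrix.sum_apply]
      rfl
  unfold wMat
  simp only [e]
  rw [prod_sum_ofFn, Matrix.trace_sum]
  refine sum_congr rfl fun i _ => ?_
  rw [← pm_trace]
  congr 1
  change _ = pmHom _
  unfold wprod
  rw [map_list_prod, map_list_prod, List.map_ofFn, List.map_ofFn]
  rfl

lemma norm_wprod {k : ℕ} (w : Fin k → Bool) (i : Fin k → Fin d) : (wprod w i).norm ≤ k := by
  unfold wprod
  induction k with
  | zero => simp
  | succ k ih =>
    rw [List.ofFn_succ, List.prod_cons]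
    refine (FreeGroup.norm_mul_le _ _).trans ?_
    have h1 : (gens d (w 0) (i 0)).norm = 1 := by
      unfold gens; split_ifs <;> simp
    have := ih (fun t => w t.succ) (fun t => i t.succ)
    omega

lemma trace_bounds {k : ℕ} {B : Fin n → Fin n → Bool} (hB : IsRegB d n B) (w : Fin k → Bool) :
    n * Mword d w ≤ Matrix.trace (wMat (adjB B) w) ∧
    Matrix.trace (wMat (adjB B) w) ≤ n * Mword d w + d ^ k * (badT B k).card := by
  classical
  obtain ⟨σ, hσ⟩ := decomp d (adjB B)
    (fun u => by rw [← hB.2.1 u, card_filter]; rfl) (fun v => by rw [← hB.2.2 v, card_filter]; rfl)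
  rw [trace_eq B σ hσ w]
  have hM : n * Mword d w = ∑ i : Fin k → Fin d, if wprod w i = 1 then n else 0 := by
    rw [← sum_filter, sum_const, smul_eq_mul, mul_comm, Mword, Nat.card_eq_fintype_card,
      Fintype.card_subtype]
  have hin : ∀ i z, B (σ i z) z = true := by
    intro i z
    have h1 := hσ (σ i z) z
    by_contra h
    simp only [adjB, h] at h1
    have h2 := single_le_sum (f := fun l => if σ i z = σ l z then 1 else 0)
      (fun _ _ => Nat.zero_le _) (mem_univ i)
    rw [← h1] at h2
    simp at h2
  have hinj : ∀ i j z, σ i z = σ j z → i = j := by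
    intro i j z h
    by_contra hij
    have h1 := hσ (σ i z) z
    have h2 : ∑ l ∈ ({i, j} : Finset (Fin d)), (if σ i z = σ l z then 1 else 0) ≤
      ∑ l, (if σ i z = σ l z then 1 else 0) := sum_le_sum_of_subset (subset_univ _)
    rw [sum_pair hij, ← h1] at h2
    simp [adjB, h] at h2
    split_ifs at h2 <;> omega
  have hone : ∀ i : Fin k → Fin d, wprod w i = 1 →
      (univ.filter fun v => FreeGroup.lift σ (wprod w i) v = v).card = n := by
    intro i hi; simp [hi]
  have hne : ∀ i : Fin k → Fin d, wprod w i ≠ 1 →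
      (univ.filter fun v => FreeGroup.lift σ (wprod w i) v = v).card ≤ (badT B k).card := by
    intro i hi
    refine le_trans (card_le_card (t := (badT B k).image Prod.fst) ?_) card_image_le
    intro v hv
    by_contra hcon
    refine lift_ne σ B hB.1 hin hinj v k ?_ _ hi (norm_wprod w i) (mem_filter.1 hv).2
    intro p q hbad
    exact hcon (mem_image.2 ⟨(v, p, q), by simp [badT, hbad], rfl⟩)
  constructor
  · rw [hM]
    refine sum_le_sum fun i _ => ?_
    split_ifs with hi
    · exact (hone i hi).ge
    · exact Nat.zero_le _
  · have : d ^ k * (badT B k).card = ∑ _i : Fin k → Fin d, (badT B k).card := by simp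
    rw [hM, this, ← sum_add_distrib]
    refine sum_le_sum fun i _ => ?_
    split_ifs with hi
    · rw [hone i hi]; omega
    · have := hne i hi; omega

lemma reg_nonempty (d n : ℕ) (h : d + 1 ≤ n) : (regDigraphs d n).Nonempty := by
  have : NeZero n := ⟨by omega⟩
  have hc : (univ.filter fun x : Fin n => 1 ≤ x.val ∧ x.val ≤ d).card = d := by
    have : (univ.filter fun x : Fin n => 1 ≤ x.val ∧ x.val ≤ d).map Fin.valEmbedding =
        Finset.Icc 1 d := by
      ext x
      simp only [mem_map, mem_filter, mem_univ, true_and, Fin.valEmbedding_apply, mem_Icc]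
      constructor
      · rintro ⟨y, hy, rfl⟩; exact hy
      · intro hx; exact ⟨⟨x, by omega⟩, hx, rfl⟩
    rw [← card_map Fin.valEmbedding, this]; simp
  refine ⟨fun i j => decide (1 ≤ (j - i).val ∧ (j - i).val ≤ d), mem_reg.2 ⟨fun i => ?_, fun i => ?_,
    fun j => ?_⟩⟩
  · simp
  · refine Eq.trans ?_ hc
    refine card_equiv (Equiv.subRight i) fun j => ?_
    simp only [mem_filter, mem_univ, true_and, decide_eq_true_eq, Equiv.subRight_apply]
  · refine Eq.trans ?_ hc
    refine card_equiv (Equiv.subLeft j) fun i => ?_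
    simp only [mem_filter, mem_univ, true_and, decide_eq_true_eq, Equiv.subLeft_apply]

end StarMom

open Filter in
/-- Convergence of star moments for uniform `d`-regular digraphs:
`(1/n) E[Tr(A_{d,n}^w)] → M_d(w)` as `n → ∞`, where the expectation is the uniform
average over all `d`-regular digraphs on `{1,…,n}`. -/
theorem star_moments_uniform_regular_digraphs (d k : ℕ) (hd : 2 ≤ d) (w : Fin k → Bool) :
    Tendsto
      (fun n : ℕ => ((regDigraphs d n).card : ℝ)⁻¹ *
        ∑ B ∈ regDigraphs d n, ((Matrix.trace (wMat (adjB B) w) : ℕ) : ℝ) / n)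
      atTop (nhds ((Mword d w : ℝ))) := by
  set M : ℝ := (Mword d w : ℝ) with hMdef
  set C : ℕ := 2 * d * (2 * d + 1) ^ (k+1) with hC
  set K : ℕ := ((2 * d + 1) ^ k) ^ 2 * d ^ 2 with hK
  have hup : Tendsto (fun n : ℕ => M + (d : ℝ) ^ k * K / ((n : ℝ) * d - C)) atTop (nhds M) := by
    have h1 : Tendsto (fun n : ℕ => (n : ℝ) * d - C) atTop atTop := by
      refine tendsto_atTop_add_const_right _ _ ?_
      exact Tendsto.atTop_mul_const (by positivity) tendsto_natCast_atTop_atTop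
    simpa using tendsto_const_nhds.add (h1.const_div_atTop ((d : ℝ) ^ k * K))
  have key : ∀ᶠ n : ℕ in atTop, d + 1 ≤ n ∧ C + 1 ≤ n := by
    filter_upwards [eventually_ge_atTop (d + 1), eventually_ge_atTop (C + 1)] with n h1 h2
    exact ⟨h1, h2⟩
  refine tendsto_of_tendsto_of_tendsto_of_le_of_le' tendsto_const_nhds hup ?_ ?_
  · filter_upwards [key] with n hn
    have hR : 0 < ((regDigraphs d n).card : ℝ) := by
      exact_mod_cast (StarMom.reg_nonempty d n hn.1).card_pos
    have hn0 : (0 : ℝ) < n := by exact_mod_cast (by omega : 0 < n)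
    rw [inv_mul_eq_div, le_div_iff₀ hR, mul_comm, ← nsmul_eq_mul]
    refine Finset.card_nsmul_le_sum _ _ _ fun B hB => ?_
    rw [le_div_iff₀ hn0, mul_comm]
    rw [hMdef]
    exact_mod_cast (StarMom.trace_bounds (StarMom.mem_reg.1 hB) w).1
  · filter_upwards [key] with n hn
    have hR : 0 < ((regDigraphs d n).card : ℝ) := by
      exact_mod_cast (StarMom.reg_nonempty d n hn.1).card_pos
    have hn0 : (0 : ℝ) < n := by exact_mod_cast (by omega : 0 < n)
    have hlt : C < n * d := by nlinarith [hn.2]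
    have hpos : (0 : ℝ) < (n : ℝ) * d - C := by
      have : (C : ℝ) < (n : ℝ) * d := by exact_mod_cast hlt
      linarith
    have hsw := StarMom.switching d n k
    rw [← hC, ← hK] at hsw
    have hsw' : ((∑ B ∈ regDigraphs d n, (StarMom.badT B k).card : ℕ) : ℝ) * ((n : ℝ) * d - C) ≤
        (regDigraphs d n).card * (n * K) := by
      have := (Nat.cast_le (α := ℝ)).2 hsw
      rw [Nat.cast_mul, Nat.cast_sub hlt.le] at this
      simpa using this
    set S : ℝ := ((∑ B ∈ regDigraphs d n, (StarMom.badT B k).card : ℕ) : ℝ) with hS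
    have h1 : ∑ B ∈ regDigraphs d n, ((Matrix.trace (wMat (adjB B) w) : ℕ) : ℝ) / n ≤
        (regDigraphs d n).card * M + (d : ℝ) ^ k * S / n := by
      have : ∀ B ∈ regDigraphs d n, ((Matrix.trace (wMat (adjB B) w) : ℕ) : ℝ) / n ≤
          M + (d : ℝ) ^ k * ((StarMom.badT B k).card : ℝ) / n := by
        intro B hB
        have h := (StarMom.trace_bounds (StarMom.mem_reg.1 hB) w).2
        have h' : ((Matrix.trace (wMat (adjB B) w) : ℕ) : ℝ) ≤
            n * M + (d : ℝ) ^ k * ((StarMom.badT B k).card : ℝ) := by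
          rw [hMdef]
          exact_mod_cast h
        rw [div_le_iff₀ hn0, add_mul, div_mul_cancel₀ _ hn0.ne']
        linarith
      refine (Finset.sum_le_sum this).trans (le_of_eq ?_)
      rw [Finset.sum_add_distrib, Finset.sum_const, nsmul_eq_mul, ← Finset.sum_div,
        ← Finset.mul_sum, hS, Nat.cast_sum]
    have h2 : S ≤ (regDigraphs d n).card * (n * K) / ((n : ℝ) * d - C) := by
      rwa [le_div_iff₀ hpos]
    rw [inv_mul_eq_div, div_le_iff₀ hR]
    refine h1.trans ?_
    have h3 : (d : ℝ) ^ k * S / n ≤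
        (d : ℝ) ^ k * ((regDigraphs d n).card * (n * K) / ((n : ℝ) * d - C)) / n := by
      gcongr
    refine (add_le_add_right h3 _).trans (le_of_eq ?_)
    field_simp
end

section
/- For every integer d ≥ 2, every k ≥ 0, and every word w ∈ Σ^k, the number of w-paths satisfies M_d(w) = Σ_{π∈ANC(w)} ( ∏_{V∈π} (−1)^{|V|/2−1} C_{|V|/2−1} ) · d^{|π|}, where |π| is the number of blocks of π. -/
/-- `π` is a partition of `[k]`: no empty block, and every element lies in
exactly one block. -/
def IsPartitionF {k : ℕ} (π : Finset (Finset (Fin k))) : Prop :=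
  (∅ ∉ π) ∧ ∀ t : Fin k, ∃! S, S ∈ π ∧ t ∈ S

/-- `a` and `b` lie in a common block of `π`. -/
def SameBlockF {k : ℕ} (π : Finset (Finset (Fin k))) (a b : Fin k) : Prop :=
  ∃ S ∈ π, a ∈ S ∧ b ∈ S

/-- `π` is non-crossing: there are no `i₁ < i₂ < j₁ < j₂` with `i₁ ∼ j₁`, `i₂ ∼ j₂`
and `i₁ ≁ i₂`. -/
def NonCrossingF {k : ℕ} (π : Finset (Finset (Fin k))) : Prop :=
  ∀ i₁ i₂ j₁ j₂ : Fin k, i₁ < i₂ → i₂ < j₁ → j₁ < j₂ →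
    SameBlockF π i₁ j₁ → SameBlockF π i₂ j₂ → SameBlockF π i₁ i₂

/-- A list of letters is alternating: it has even length and equals `1*1*⋯1*`
or `*1*1⋯*1`. -/
def IsAltList (u : List Bool) : Prop :=
  u.length % 2 = 0 ∧
    ((∀ m (h : m < u.length), u.get ⟨m, h⟩ = decide (m % 2 = 0)) ∨
     (∀ m (h : m < u.length), u.get ⟨m, h⟩ = decide (m % 2 = 1)))

/-- Every block of `π`, read in increasing order, induces an alternating subword of `w`. -/
def AltBlocks {k : ℕ} (w : Fin k → Bool) (π : Finset (Finset (Fin k))) : Prop :=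
  ∀ S ∈ π, IsAltList ((S.sort (· ≤ ·)).map w)

open Classical in
/-- The set `ANC(w)` of alternating non-crossing partitions of `w`. -/
noncomputable def ANC {k : ℕ} (w : Fin k → Bool) : Finset (Finset (Finset (Fin k))) :=
  Finset.univ.filter fun π => IsPartitionF π ∧ NonCrossingF π ∧ AltBlocks w π


/-! ### Alternating blocks -/

/-- Number of elements of `S` in the half-open interval `(s,t]`. -/
def cnt {k : ℕ} (S : Finset (Fin k)) (s t : Fin k) : ℕ :=
  (S.filter fun u => s < u ∧ u ≤ t).card

/-- Monochromatic alternating blocks. -/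
def AltB {k : ℕ} {Γ : Type} (c : Fin k → Γ) (w : Fin k → Bool) (S : Finset (Fin k)) : Prop :=
  Even S.card ∧ (∀ s ∈ S, ∀ t ∈ S, c s = c t) ∧
    ∀ s ∈ S, ∀ t ∈ S, s ≤ t → (w s = w t ↔ Even (cnt S s t))

lemma cnt_add {k : ℕ} (S : Finset (Fin k)) {s t u : Fin k} (h1 : s ≤ t) (h2 : t ≤ u) :
    cnt S s t + cnt S t u = cnt S s u := by
  unfold cnt
  rw [← Finset.card_union_of_disjoint]
  · congr 1
    ext x
    simp only [Finset.mem_union, Finset.mem_filter]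
    grind
  · rw [Finset.disjoint_left]
    intro x
    simp only [Finset.mem_filter]
    grind

lemma cnt_union {k : ℕ} {B C : Finset (Fin k)} (h : Disjoint B C) (s t : Fin k) :
    cnt (B ∪ C) s t = cnt B s t + cnt C s t := by
  unfold cnt
  rw [Finset.filter_union, Finset.card_union_of_disjoint]
  exact Finset.disjoint_filter_filter h

lemma cnt_congr {k : ℕ} {B C : Finset (Fin k)} {s t s' t' : Fin k}
    (h : ∀ x, (x ∈ B ∧ s < x ∧ x ≤ t) ↔ (x ∈ C ∧ s' < x ∧ x ≤ t')) :
    cnt B s t = cnt C s' t' := by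
  unfold cnt
  congr 1
  ext x
  simpa using h x

lemma cnt_zero {k : ℕ} {B : Finset (Fin k)} {s t : Fin k}
    (h : ∀ x ∈ B, ¬ (s < x ∧ x ≤ t)) : cnt B s t = 0 := by
  unfold cnt
  rw [Finset.card_eq_zero, Finset.filter_eq_empty_iff]
  exact h

lemma cnt_full {k : ℕ} {B : Finset (Fin k)} {s t : Fin k}
    (h : ∀ x ∈ B, (s < x ∧ x ≤ t)) : cnt B s t = B.card := by
  unfold cnt
  rw [Finset.filter_true_of_mem h]

lemma merge_alt {k : ℕ} {Γ : Type} {c : Fin k → Γ} {w : Fin k → Bool} {B C : Finset (Fin k)}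
    (hB : AltB c w B) (hC : AltB c w C) {a b : Fin k}
    (hBI : ∀ x ∈ B, a < x ∧ x ≤ b) (hCI : ∀ x ∈ C, ¬ (a < x ∧ x ≤ b))
    (ha : a ∈ C) (hb : b ∈ B) (hw : w a = w b) (hc : c a = c b) : AltB c w (B ∪ C) := by
  obtain ⟨hB1, hB2, hB3⟩ := hB
  obtain ⟨hC1, hC2, hC3⟩ := hC
  have hd : Disjoint B C := by
    rw [Finset.disjoint_left]; intro x h1 h2; exact hCI x h2 (hBI x h1)
  have hab := (hBI b hb).1
  refine ⟨?_, ?_, ?_⟩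
  · rw [Finset.card_union_of_disjoint hd]; exact hB1.add hC1
  · intro s hs t ht
    rw [Finset.mem_union] at hs ht
    have e1 : ∀ x, x ∈ B ∨ x ∈ C → c x = c a := by
      rintro x (h | h)
      · rw [hc]; exact hB2 x h b hb
      · exact hC2 x h a ha
    rw [e1 s hs, e1 t ht]
  · intro s hs t ht hst
    rw [cnt_union hd]
    rw [Finset.mem_union] at hs ht
    rcases hs with hs | hs <;> rcases ht with ht | ht
    · have := cnt_zero (B := C) (s := s) (t := t) (by grind)
      rw [this, add_zero]; exact hB3 s hs t ht hst
    · have htb : b < t := by grind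
      have h1 := hB3 s hs b hb (hBI s hs).2
      have h2 := hC3 a ha t ht (by order)
      have e1 : cnt B s t = cnt B s b := cnt_congr (by grind)
      have e2 : cnt C s t = cnt C a t := cnt_congr (by grind)
      rw [e1, e2, Nat.even_add, ← h1, ← h2, hw]
      cases w s <;> cases w t <;> cases w b <;> simp
    · have hsa : s ≤ a := by grind
      have h1 := hC3 s hs a ha hsa
      have h2 := hB3 t ht b hb (hBI t ht).2
      have e1 : cnt B s t = cnt B a t := cnt_congr (by grind)
      have e2 : cnt C s t = cnt C s a := cnt_congr (by grind)
      have e3 := cnt_add B (hBI t ht).1.le (hBI t ht).2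
      rw [cnt_full hBI] at e3
      have e4 : Even (cnt B a t) ↔ Even (cnt B t b) := by
        rw [← e3] at hB1; exact Nat.even_add.1 hB1
      rw [e1, e2, Nat.even_add, ← h1, e4, ← h2, hw]
      cases w s <;> cases w t <;> cases w b <;> simp
    · have h1 := hC3 s hs t ht hst
      by_cases hh : s ≤ a ∧ b ≤ t
      · have : cnt B s t = B.card := cnt_full (by grind)
        rw [this, Nat.even_add, h1]
        simp [hB1]
      · have := cnt_zero (B := B) (s := s) (t := t) (by grind)
        rw [this, zero_add]; exact h1

lemma split_alt {k : ℕ} {Γ : Type} {c : Fin k → Γ} {w : Fin k → Bool} {W : Finset (Fin k)}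
    (hW : AltB c w W) {a b : Fin k} (hab : a ≤ b)
    (ha : a ∈ W) (hb : b ∈ W) (hw : w a = w b) :
    AltB c w (W.filter fun u => a < u ∧ u ≤ b) ∧
    AltB c w (W \ (W.filter fun u => a < u ∧ u ≤ b)) := by
  obtain ⟨h1, h2, h3⟩ := hW
  have hev : Even (W.filter fun u => a < u ∧ u ≤ b).card := (h3 a ha b hb hab).1 hw
  set B := W.filter fun u => a < u ∧ u ≤ b with hB
  have hBW : B ⊆ W := Finset.filter_subset _ _
  have hBm : ∀ x, x ∈ B ↔ x ∈ W ∧ a < x ∧ x ≤ b := by simp [hB]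
  refine ⟨⟨hev, fun s hs t ht => h2 s (hBW hs) t (hBW ht), ?_⟩,
    ⟨?_, fun s hs t ht => h2 s (Finset.sdiff_subset hs) t (Finset.sdiff_subset ht), ?_⟩⟩
  · intro s hs t ht hst
    rw [h3 s (hBW hs) t (hBW ht) hst, cnt_congr (B := W) (C := B) (s' := s) (t' := t)]
    grind
  · rw [Finset.card_sdiff_of_subset hBW]
    exact (Nat.even_sub (Finset.card_le_card hBW)).2 (by simp [h1, hev])
  · intro s hs t ht hst
    rw [h3 s (Finset.sdiff_subset hs) t (Finset.sdiff_subset ht) hst]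
    have e := cnt_union (B := W \ B) (C := B) Finset.sdiff_disjoint s t
    rw [Finset.sdiff_union_of_subset hBW] at e
    rw [e]
    rw [Finset.mem_sdiff] at hs ht
    by_cases hh : s ≤ a ∧ b ≤ t
    · have : cnt B s t = B.card := cnt_full (by grind)
      rw [this, Nat.even_add]
      simp [hev]
    · have := cnt_zero (B := B) (s := s) (t := t) (by grind)
      rw [this, add_zero]

/-! ### The Catalan convolution -/

/-- Weight of a block of size `n`. -/
def wtB (n : ℕ) : ℤ := (-1 : ℤ) ^ (n / 2 - 1) * (catalan (n / 2 - 1) : ℤ)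

lemma conv_sum (n : ℕ) (hn : 2 ≤ n) :
    ∑ b ∈ Finset.Ico 1 n, wtB (2 * b) * wtB (2 * n - 2 * b) = - wtB (2 * n) := by
  obtain ⟨m, rfl⟩ : ∃ m, n = m + 2 := ⟨n - 2, by omega⟩
  rw [Finset.sum_Ico_eq_sum_range]
  have : ∀ i ∈ Finset.range (m + 2 - 1),
      wtB (2 * (1 + i)) * wtB (2 * (m + 2) - 2 * (1 + i))
        = (-1) ^ m * ((catalan i : ℤ) * (catalan (m - i) : ℤ)) := by
    intro i hi
    rw [Finset.mem_range] at hi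
    unfold wtB
    have e1 : 2 * (1 + i) / 2 - 1 = i := by omega
    have e2 : (2 * (m + 2) - 2 * (1 + i)) / 2 - 1 = m - i := by omega
    rw [e1, e2]
    have e3 : (-1 : ℤ) ^ m = (-1) ^ i * (-1) ^ (m - i) := by
      rw [← pow_add]; congr 1; omega
    rw [e3]; ring
  rw [Finset.sum_congr rfl this, ← Finset.mul_sum]
  unfold wtB
  have e1 : 2 * (m + 2) / 2 - 1 = m + 1 := by omega
  rw [e1, catalan_succ', Finset.Nat.sum_antidiagonal_eq_sum_range_succ
    (fun i j => catalan i * catalan j)]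
  push_cast
  rw [pow_succ]
  simp only [Nat.succ_eq_add_one]
  ring

lemma cyc_sum (n j : ℕ) (hj : j < 2 * n) (F : ℕ → ℤ) (hF : ∀ m ≤ 2 * n, F (2 * n - m) = F m) :
    ∑ i ∈ (Finset.range (2 * n)).filter (fun i => i ≠ j ∧ i % 2 = j % 2), F (max j i - min j i)
      = ∑ b ∈ Finset.Ico 1 n, F (2 * b) := by
  refine Finset.sum_nbij' (fun i => if j < i then (i - j) / 2 else n - (j - i) / 2)
    (fun b => if j + 2 * b < 2 * n then j + 2 * b else j + 2 * b - 2 * n) ?_ ?_ ?_ ?_ ?_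
  · intro i hi
    simp only [Finset.mem_filter, Finset.mem_range, Finset.mem_Ico] at *
    split_ifs <;> omega
  · intro i hi
    simp only [Finset.mem_filter, Finset.mem_range, Finset.mem_Ico] at *
    split_ifs <;> omega
  · intro i hi
    simp only [Finset.mem_filter, Finset.mem_range] at *
    split_ifs <;> omega
  · intro i hi
    simp only [Finset.mem_Ico] at *
    split_ifs <;> omega
  · intro i hi
    simp only [Finset.mem_filter, Finset.mem_range] at *
    split_ifs with h
    · congr 1; omega
    · rw [← hF _ (by omega)]; congr 1; omega

lemma cnt_emb {k : ℕ} (S : Finset (Fin k)) (i j : Fin S.card) :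
    cnt S (S.orderEmbOfFin rfl i) (S.orderEmbOfFin rfl j) = (j : ℕ) - i := by
  have : (S.filter fun u => S.orderEmbOfFin rfl i < u ∧ u ≤ S.orderEmbOfFin rfl j)
      = (Finset.Ioc i j).map (S.orderEmbOfFin rfl).toEmbedding := by
    ext x
    simp only [Finset.mem_filter, Finset.mem_map, Finset.mem_Ioc]
    constructor
    · rintro ⟨hx, h1, h2⟩
      have : x ∈ Set.range (S.orderEmbOfFin rfl) := by
        rw [Finset.range_orderEmbOfFin]; exact hx
      obtain ⟨m, rfl⟩ := this
      exact ⟨m, ⟨by simpa using h1, by simpa using h2⟩, rfl⟩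
    · rintro ⟨m, ⟨h1, h2⟩, rfl⟩
      exact ⟨Finset.orderEmbOfFin_mem _ _ _, by simpa using h1, by simpa using h2⟩
  unfold cnt
  rw [this, Finset.card_map, Fin.card_Ioc]

lemma local_sum {k : ℕ} {Γ : Type} {c : Fin k → Γ} {w : Fin k → Bool} {W : Finset (Fin k)}
    (hW : AltB c w W) (h4 : 4 ≤ W.card) {p : Fin k} (hp : p ∈ W) :
    ∑ r ∈ W.filter (fun r => r ≠ p ∧ w r = w p),
      wtB (cnt W (min p r) (max p r)) * wtB (W.card - cnt W (min p r) (max p r))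
      = - wtB W.card := by
  obtain ⟨h1, h2, h3⟩ := hW
  obtain ⟨n, hn⟩ := h1.two_dvd
  set e := W.orderEmbOfFin rfl with he
  have hsurj : ∀ x ∈ W, ∃ m, e m = x := by
    intro x hx
    have : x ∈ Set.range (W.orderEmbOfFin rfl) := by
      rw [Finset.range_orderEmbOfFin]; exact hx
    exact this
  obtain ⟨j, rfl⟩ := hsurj p hp
  have hcnt : ∀ i : Fin W.card, cnt W (min (e j) (e i)) (max (e j) (e i))
      = max (j : ℕ) i - min (j : ℕ) i := by
    intro i
    rcases le_total j i with h | h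
    · have h' : e j ≤ e i := by simpa using h
      have h'' : (j : ℕ) ≤ i := h
      rw [min_eq_left h', max_eq_right h', min_eq_left h'', max_eq_right h'', he, cnt_emb]
    · have h' : e i ≤ e j := by simpa using h
      have h'' : (i : ℕ) ≤ j := h
      rw [min_eq_right h', max_eq_left h', min_eq_right h'', max_eq_left h'', he, cnt_emb]
  have hww : ∀ i : Fin W.card, (w (e i) = w (e j) ↔ (i : ℕ) % 2 = (j : ℕ) % 2) := by
    intro i
    rcases le_total j i with h | h
    · have h' : e j ≤ e i := by simpa using h
      have h'' : (j : ℕ) ≤ i := h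
      have := h3 _ hp _ (Finset.orderEmbOfFin_mem W rfl i) h'
      rw [← he] at this
      rw [eq_comm, this, he, cnt_emb, Nat.even_iff]
      omega
    · have h' : e i ≤ e j := by simpa using h
      have h'' : (i : ℕ) ≤ j := h
      have := h3 _ (Finset.orderEmbOfFin_mem W rfl i) _ hp h'
      rw [← he] at this
      rw [this, he, cnt_emb, Nat.even_iff]
      omega
  have hj : (j : ℕ) < 2 * n := by have := j.2; omega
  have key := cyc_sum n j hj (fun m => wtB m * wtB (2 * n - m)) (by
    intro m hm
    rw [mul_comm, Nat.sub_sub_self hm])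
  have cs := conv_sum n (by omega)
  have hR : wtB W.card = wtB (2 * n) := by rw [hn]
  have hN : ∀ m, W.card - m = 2 * n - m := by intro m; omega
  rw [hR, ← cs, ← key]
  symm
  refine Finset.sum_bij (fun i hi => e ⟨i, by
    simp only [Finset.mem_filter, Finset.mem_range] at hi; omega⟩) ?_ ?_ ?_ ?_
  · intro i hi
    simp only [Finset.mem_filter, Finset.mem_range] at hi
    simp only [Finset.mem_filter]
    refine ⟨Finset.orderEmbOfFin_mem _ _ _, ?_, ?_⟩
    · intro h
      have := e.injective h
      apply hi.2.1
      rw [← this]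
    · rw [hww]; exact hi.2.2
  · intro a ha b hb h
    have := e.injective h
    simpa using this
  · intro b hb
    simp only [Finset.mem_filter] at hb
    obtain ⟨i, rfl⟩ := hsurj b hb.1
    refine ⟨i, ?_, rfl⟩
    simp only [Finset.mem_filter, Finset.mem_range]
    refine ⟨by have := i.2; omega, ?_, (hww i).1 hb.2.2⟩
    intro h
    exact hb.2.1 (by rw [Fin.ext h])
  · intro i hi
    rw [hcnt, hN]

/-! ### Partitions of a subset of positions -/

/-- `S` and `T` do not cross, starting with `S`. -/
def NCr {k : ℕ} (S T : Finset (Fin k)) : Prop :=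
  ∀ a ∈ S, ∀ b ∈ T, ∀ c ∈ S, ∀ e ∈ T, a < b → b < c → c < e → False

/-- Monochromatic alternating non-crossing partitions of `A`. -/
structure Good {k : ℕ} {Γ : Type} (c : Fin k → Γ) (w : Fin k → Bool) (A : Finset (Fin k))
    (π : Finset (Finset (Fin k))) : Prop where
  ne : ∀ S ∈ π, S.Nonempty
  cov : ∀ t, t ∈ A ↔ ∃ S ∈ π, t ∈ S
  uniq : ∀ S ∈ π, ∀ T ∈ π, ∀ t, t ∈ S → t ∈ T → S = T
  nc : ∀ S ∈ π, ∀ T ∈ π, S ≠ T → NCr S T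
  alt : ∀ S ∈ π, AltB c w S

/-- The block of `π` containing `p`. -/
def blk {k : ℕ} (π : Finset (Finset (Fin k))) (p : Fin k) : Finset (Fin k) :=
  (π.filter (fun S => p ∈ S)).biUnion id

section
variable {k : ℕ} {Γ : Type} {c : Fin k → Γ} {w : Fin k → Bool} {A : Finset (Fin k)}
  {π σ : Finset (Finset (Fin k))} {p q : Fin k}

lemma blk_eq (h : Good c w A π) {S : Finset (Fin k)} (hS : S ∈ π) (hp : p ∈ S) :
    blk π p = S := by
  ext x
  simp only [blk, Finset.mem_biUnion, Finset.mem_filter, id]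
  constructor
  · rintro ⟨T, ⟨hT, hpT⟩, hx⟩
    rwa [h.uniq S hS T hT p hp hpT]
  · intro hx
    exact ⟨S, ⟨hS, hp⟩, hx⟩

lemma blk_mem (h : Good c w A π) (hp : p ∈ A) : blk π p ∈ π ∧ p ∈ blk π p := by
  obtain ⟨S, hS, hpS⟩ := (h.cov p).1 hp
  rw [blk_eq h hS hpS]
  exact ⟨hS, hpS⟩

lemma good_replace (h : Good c w A σ) {W B C : Finset (Fin k)} (hW : W ∈ σ)
    (hBC : ∀ x, x ∈ W ↔ x ∈ B ∨ x ∈ C) (hd : ∀ x, x ∈ B → x ∈ C → False)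
    (hB : AltB c w B) (hC : AltB c w C) (hBn : B.Nonempty) (hCn : C.Nonempty)
    (n1 : NCr B C) (n2 : NCr C B) : Good c w A (insert B (insert C (σ.erase W))) := by
  have hm : ∀ S, S ∈ insert B (insert C (σ.erase W)) ↔ S = B ∨ S = C ∨ (S ≠ W ∧ S ∈ σ) := by
    intro S; simp
  have hsub : ∀ S ∈ insert B (insert C (σ.erase W)), ∃ S' ∈ σ, (∀ x ∈ S, x ∈ S') ∧
      ((S = B ∧ S' = W) ∨ (S = C ∧ S' = W) ∨ (S = S' ∧ S' ≠ W)) := by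
    intro S hS
    rcases (hm S).1 hS with rfl | rfl | ⟨h1, h2⟩
    · exact ⟨W, hW, fun x hx => (hBC x).2 (Or.inl hx), by simp⟩
    · exact ⟨W, hW, fun x hx => (hBC x).2 (Or.inr hx), by simp⟩
    · exact ⟨S, h2, fun x hx => hx, by simp [h1]⟩
  constructor
  · intro S hS
    rcases (hm S).1 hS with rfl | rfl | ⟨h1, h2⟩
    · exact hBn
    · exact hCn
    · exact h.ne S h2
  · intro t
    rw [h.cov t]
    constructor
    · rintro ⟨S, hS, ht⟩
      by_cases hSW : S = W
      · subst hSW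
        rcases (hBC t).1 ht with h1 | h1
        · exact ⟨B, by simp, h1⟩
        · exact ⟨C, by simp, h1⟩
      · exact ⟨S, by simp [hS, hSW], ht⟩
    · rintro ⟨S, hS, ht⟩
      obtain ⟨S', h1, h2, -⟩ := hsub S hS
      exact ⟨S', h1, h2 t ht⟩
  · intro S hS T hT t htS htT
    obtain ⟨S', h1, h2, h3⟩ := hsub S hS
    obtain ⟨T', h1', h2', h3'⟩ := hsub T hT
    have hST := h.uniq S' h1 T' h1' t (h2 t htS) (h2' t htT)
    have := hd t
    grind
  · intro S hS T hT hST
    obtain ⟨S', h1, h2, h3⟩ := hsub S hS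
    obtain ⟨T', h1', h2', h3'⟩ := hsub T hT
    by_cases hST' : S' = T'
    · have : (S = B ∧ T = C) ∨ (S = C ∧ T = B) := by grind
      rcases this with ⟨rfl, rfl⟩ | ⟨rfl, rfl⟩
      · exact n1
      · exact n2
    · intro a ha b hb c' hc e he
      exact h.nc S' h1 T' h1' hST' a (h2 a ha) b (h2' b hb) c' (h2 c' hc) e (h2' e he)
  · intro S hS
    rcases (hm S).1 hS with rfl | rfl | ⟨h1, h2⟩
    · exact hB
    · exact hC
    · exact h.alt S h2

lemma good_merge (h : Good c w A π) {V₁ V₂ : Finset (Fin k)} (h1 : V₁ ∈ π) (h2 : V₂ ∈ π)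
    (hp : p ∈ V₁) (hq : q ∈ V₂) (hpq : p < q)
    (hadj : ∀ x ∈ A, ¬ (p < x ∧ x < q)) (halt : AltB c w (V₁ ∪ V₂)) :
    Good c w A (insert (V₁ ∪ V₂) ((π.erase V₁).erase V₂)) := by
  have hm : ∀ S, S ∈ insert (V₁ ∪ V₂) ((π.erase V₁).erase V₂) ↔
      S = V₁ ∪ V₂ ∨ (S ≠ V₂ ∧ S ≠ V₁ ∧ S ∈ π) := by
    intro S; simp
  have hcr : ∀ T ∈ π, T ≠ V₁ → T ≠ V₂ → NCr T (V₁ ∪ V₂) ∧ NCr (V₁ ∪ V₂) T := by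
    intro T hT hT1 hT2
    have a1 := h.nc T hT V₁ h1 hT1
    have a2 := h.nc V₁ h1 T hT hT1.symm
    have a3 := h.nc T hT V₂ h2 hT2
    have a4 := h.nc V₂ h2 T hT hT2.symm
    have hT' : ∀ x ∈ T, x < p ∨ q < x := by
      intro x hx
      have b1 := hadj x ((h.cov x).2 ⟨T, hT, hx⟩)
      have b2 : x ≠ p := fun e => hT1 (h.uniq T hT V₁ h1 x hx (e ▸ hp))
      have b3 : x ≠ q := fun e => hT2 (h.uniq T hT V₂ h2 x hx (e ▸ hq))
      grind
    constructor
    · intro a ha b hb c' hc e he hab hbc hce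
      rw [Finset.mem_union] at hb he
      have ta := hT' a ha
      have tc := hT' c' hc
      rcases hb with hb | hb <;> rcases he with he | he
      · exact a1 a ha b hb c' hc e he hab hbc hce
      · rcases tc with tc | tc
        · exact a1 a ha b hb c' hc p hp hab hbc tc
        · rcases ta with ta | ta
          · exact a3 a ha q hq c' hc e he (by order) tc hce
          · exact a2 p hp a ha b hb c' hc (by order) hab hbc
      · rcases tc with tc | tc
        · exact a3 a ha b hb c' hc q hq hab hbc (by order)
        · rcases ta with ta | ta
          · exact a1 a ha p hp c' hc e he ta (by order) hce
          · exact a4 q hq a ha b hb c' hc ta hab hbc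
      · exact a3 a ha b hb c' hc e he hab hbc hce
    · intro a ha b hb c' hc e he hab hbc hce
      rw [Finset.mem_union] at ha hc
      have tb := hT' b hb
      have te := hT' e he
      rcases ha with ha | ha <;> rcases hc with hc | hc
      · exact a2 a ha b hb c' hc e he hab hbc hce
      · rcases tb with tb | tb
        · rcases te with te | te
          · exact a3 b hb c' hc e he q hq hbc hce (by order)
          · exact a2 a ha b hb p hp e he hab tb (by order)
        · exact a4 q hq b hb c' hc e he tb hbc hce
      · rcases tb with tb | tb
        · rcases te with te | te
          · exact a1 b hb c' hc e he p hp hbc hce te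
          · exact a4 a ha b hb q hq e he hab (by order) te
        · exact a2 p hp b hb c' hc e he (by order) hbc hce
      · exact a4 a ha b hb c' hc e he hab hbc hce
  constructor
  · intro S hS
    rcases (hm S).1 hS with rfl | ⟨_, _, h3⟩
    · exact ⟨p, by simp [hp]⟩
    · exact h.ne S h3
  · intro t
    rw [h.cov t]
    constructor
    · rintro ⟨S, hS, ht⟩
      by_cases hS1 : S = V₁
      · subst hS1; exact ⟨_, by simp, Finset.mem_union_left V₂ ht⟩
      by_cases hS2 : S = V₂
      · subst hS2; exact ⟨_, by simp, Finset.mem_union_right V₁ ht⟩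
      exact ⟨S, by simp [hS, hS1, hS2], ht⟩
    · rintro ⟨S, hS, ht⟩
      rcases (hm S).1 hS with rfl | ⟨_, _, h3⟩
      · rcases Finset.mem_union.1 ht with ht | ht
        · exact ⟨V₁, h1, ht⟩
        · exact ⟨V₂, h2, ht⟩
      · exact ⟨S, h3, ht⟩
  · intro S hS T hT t htS htT
    have := h.uniq
    rcases (hm S).1 hS with rfl | ⟨u1, u2, u3⟩ <;> rcases (hm T).1 hT with rfl | ⟨v1, v2, v3⟩
    · rfl
    · exfalso
      rcases Finset.mem_union.1 htS with ht | ht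
      · exact v2 (this T v3 V₁ h1 t htT ht)
      · exact v1 (this T v3 V₂ h2 t htT ht)
    · exfalso
      rcases Finset.mem_union.1 htT with ht | ht
      · exact u2 (this S u3 V₁ h1 t htS ht)
      · exact u1 (this S u3 V₂ h2 t htS ht)
    · exact this S u3 T v3 t htS htT
  · intro S hS T hT hST
    rcases (hm S).1 hS with rfl | ⟨u1, u2, u3⟩ <;> rcases (hm T).1 hT with rfl | ⟨v1, v2, v3⟩
    · exact absurd rfl hST
    · exact (hcr T v3 v2 v1).2
    · exact (hcr S u3 u2 u1).1
    · exact h.nc S u3 T v3 hST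
  · intro S hS
    rcases (hm S).1 hS with rfl | ⟨_, _, h3⟩
    · exact halt
    · exact h.alt S h3

lemma exists_cut (h : Good c w A π) {V₁ V₂ : Finset (Fin k)} (h1 : V₁ ∈ π) (h2 : V₂ ∈ π)
    (hne : V₁ ≠ V₂) (hp : p ∈ V₁) (hq : q ∈ V₂) (hpq : p < q)
    (hadj : ∀ x ∈ A, ¬ (p < x ∧ x < q)) (hc : c p = c q) (hw : w p ≠ w q) :
    AltB c w (V₁ ∪ V₂) ∧ ∃ r ∈ V₁ ∪ V₂, r ≠ p ∧ w r = w p ∧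
      ((((V₁ ∪ V₂).filter fun u => min p r < u ∧ u ≤ max p r) = V₁ ∨
        ((V₁ ∪ V₂).filter fun u => min p r < u ∧ u ≤ max p r) = V₂)) := by
  have hdis : ∀ x, x ∈ V₁ → x ∈ V₂ → False := fun x a b => hne (h.uniq V₁ h1 V₂ h2 x a b)
  have hA : ∀ x, x ∈ V₁ ∨ x ∈ V₂ → x ≤ p ∨ q ≤ x := by
    intro x hx
    have : x ∈ A := (h.cov x).2 (by
      rcases hx with hx | hx
      · exact ⟨_, h1, hx⟩
      · exact ⟨_, h2, hx⟩)
    have := hadj x this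
    grind
  have n12 := h.nc V₁ h1 V₂ h2 hne
  have n21 := h.nc V₂ h2 V₁ h1 hne.symm
  have al1 := h.alt V₁ h1
  have al2 := h.alt V₂ h2
  by_cases hcase : ∀ x ∈ V₂, p < x
  · obtain ⟨r, hr, hrmax⟩ := V₂.exists_max_image id ⟨q, hq⟩
    simp only [id] at hrmax
    have hpr : p < r := hcase r hr
    have e1 : cnt V₂ p r = V₂.card := cnt_full (fun x hx => ⟨hcase x hx, hrmax x hx⟩)
    have e2 : cnt V₂ p q = 1 := by
      unfold cnt
      rw [Finset.card_eq_one]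
      refine ⟨q, ?_⟩
      ext x
      simp only [Finset.mem_filter, Finset.mem_singleton]
      constructor
      · rintro ⟨hx, h3, h4⟩
        have := hA x (Or.inr hx)
        grind
      · rintro rfl; exact ⟨hq, hpq, le_rfl⟩
    have e3 := cnt_add V₂ hpq.le (hrmax q hq)
    have e4 := al2.2.2 q hq r hr (hrmax q hq)
    have e5 := al2.1
    have hwr : w r = w p := by
      have : ¬ Even (cnt V₂ q r) := by
        rw [Nat.even_iff] at *; omega
      rw [← e4] at this
      revert this hw
      cases w r <;> cases w p <;> cases w q <;> simp
    have hV1 : ∀ x ∈ V₁, ¬ (p < x ∧ x ≤ r) := by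
      rintro x hx ⟨h3, h4⟩
      have h5 : x ≠ r := fun e => hdis x hx (e ▸ hr)
      have h6 : x ≠ q := fun e => hdis x hx (e ▸ hq)
      have h7 := hA x (Or.inl hx)
      exact n12 p hp q hq x hx r hr hpq (by grind) (by order)
    refine ⟨?_, r, by simp [hr], hpr.ne', hwr, Or.inr ?_⟩
    · rw [Finset.union_comm]
      exact merge_alt al2 al1 (fun x hx => ⟨hcase x hx, hrmax x hx⟩) hV1 hp hr hwr.symm
        (hc.trans (al2.2.1 q hq r hr))
    · rw [min_eq_left hpr.le, max_eq_right hpr.le]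
      ext x
      simp only [Finset.mem_filter, Finset.mem_union]
      have := hcase x
      have := hrmax x
      have := hV1 x
      grind
  · push Not at hcase
    obtain ⟨r0, hr0, hr0p⟩ := hcase
    obtain ⟨r, hr, hrmax⟩ := (V₂.filter (fun x => x ≤ p)).exists_max_image id
      ⟨r0, by simp [hr0, hr0p]⟩
    simp only [id, Finset.mem_filter] at hrmax hr
    obtain ⟨hr, hrp'⟩ := hr
    have hrp : r < p := lt_of_le_of_ne hrp' (fun e => hdis p hp (e ▸ hr))
    have e2 : cnt V₂ r q = 1 := by
      unfold cnt
      rw [Finset.card_eq_one]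
      refine ⟨q, ?_⟩
      ext x
      simp only [Finset.mem_filter, Finset.mem_singleton]
      constructor
      · rintro ⟨hx, h3, h4⟩
        have := hA x (Or.inr hx)
        have := hrmax x
        grind
      · rintro rfl; exact ⟨hq, by order, le_rfl⟩
    have e4 := al2.2.2 r hr q hq (by order)
    have hwr : w r = w p := by
      rw [e2] at e4
      revert e4 hw
      cases w r <;> cases w p <;> cases w q <;> simp
    have hV1 : ∀ x ∈ V₁, r < x ∧ x ≤ p := by
      intro x hx
      have h5 : x ≠ r := fun e => hdis x hx (e ▸ hr)
      have h6 : x ≠ q := fun e => hdis x hx (e ▸ hq)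
      have h7 := hA x (Or.inl hx)
      constructor
      · by_contra h8
        exact n12 x hx r hr p hp q hq (by grind) hrp hpq
      · by_contra h8
        exact n21 r hr p hp q hq x hx hrp hpq (by grind)
    have hV2 : ∀ x ∈ V₂, ¬ (r < x ∧ x ≤ p) := by
      intro x hx
      have := hrmax x
      grind
    refine ⟨?_, r, by simp [hr], hrp.ne, hwr, Or.inl ?_⟩
    · exact merge_alt al1 al2 hV1 hV2 hr hp hwr ((al2.2.1 r hr q hq).trans hc.symm)
    · rw [min_eq_right hrp.le, max_eq_left hrp.le]
      ext x
      simp only [Finset.mem_filter, Finset.mem_union]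
      have := hV1 x
      have := hV2 x
      grind

end

/-! ### Removing an adjacent pair of inverse letters -/

open Classical in
/-- The set of monochromatic alternating non-crossing partitions of `A`. -/
noncomputable def GS {k : ℕ} {Γ : Type} (c : Fin k → Γ) (w : Fin k → Bool)
    (A : Finset (Fin k)) : Finset (Finset (Finset (Fin k))) :=
  Finset.univ.filter fun π => Good c w A π

/-- The piece of `W` between `p` and `r`. -/
def piece {k : ℕ} (W : Finset (Fin k)) (p r : Fin k) : Finset (Fin k) :=
  W.filter fun u => min p r < u ∧ u ≤ max p r

/-- Split the block `W` of `σ` at `p` and `r`. -/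
def spl {k : ℕ} (W : Finset (Fin k)) (p r : Fin k) (σ : Finset (Finset (Fin k))) :
    Finset (Finset (Fin k)) :=
  insert (piece W p r) (insert (W \ piece W p r) (σ.erase W))

/-- Merge the blocks of `p` and `q`. -/
def mrg {k : ℕ} (p q : Fin k) (π : Finset (Finset (Fin k))) : Finset (Finset (Fin k)) :=
  insert (blk π p ∪ blk π q) ((π.erase (blk π p)).erase (blk π q))

section
variable {k : ℕ} {Γ : Type} {c : Fin k → Γ} {w : Fin k → Bool} {A : Finset (Fin k)}
  {π σ : Finset (Finset (Fin k))} {p q : Fin k}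

lemma mem_GS : π ∈ GS c w A ↔ Good c w A π := by
  simp [GS]

lemma piece_sub {W : Finset (Fin k)} {r : Fin k} : piece W p r ⊆ W := Finset.filter_subset _ _

lemma piece_ne {W : Finset (Fin k)} {r : Fin k} (hp : p ∈ W) (hr : r ∈ W) (hne : r ≠ p) :
    (piece W p r).Nonempty ∧ (W \ piece W p r).Nonempty := by
  rcases lt_or_gt_of_ne hne with h | h
  · refine ⟨⟨p, ?_⟩, ⟨r, ?_⟩⟩
    · simp [piece, hp, h]
    · simp [piece, hr, h.le]
  · refine ⟨⟨r, ?_⟩, ⟨p, ?_⟩⟩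
    · simp [piece, hr, h]
    · simp [piece, hp, h.le]

lemma good_spl (h : Good c w A σ) {W : Finset (Fin k)} (hW : W ∈ σ) {r : Fin k}
    (hp : p ∈ W) (hr : r ∈ W) (hne : r ≠ p) (hw : w r = w p) : Good c w A (spl W p r σ) := by
  have hmin : min p r ∈ W := by rcases min_choice p r with e | e <;> rw [e] <;> assumption
  have hmax : max p r ∈ W := by rcases max_choice p r with e | e <;> rw [e] <;> assumption
  have hww : w (min p r) = w (max p r) := by
    rcases le_total p r with e | e
    · rw [min_eq_left e, max_eq_right e, hw]
    · rw [min_eq_right e, max_eq_left e, hw]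
  have hs := split_alt (h.alt W hW) (min_le_max (a := p) (b := r)) hmin hmax hww
  obtain ⟨ne1, ne2⟩ := piece_ne hp hr hne
  refine good_replace h hW ?_ ?_ hs.1 hs.2 ne1 ne2 ?_ ?_
  · intro x
    rw [Finset.mem_sdiff]
    have := @piece_sub k p W r x
    tauto
  · intro x h1 h2
    exact (Finset.mem_sdiff.1 h2).2 h1
  · intro a ha b hb c' hc e he hab hbc hce
    simp only [piece, Finset.mem_sdiff, Finset.mem_filter] at ha hb hc he
    grind
  · intro a ha b hb c' hc e he hab hbc hce
    simp only [piece, Finset.mem_sdiff, Finset.mem_filter] at ha hb hc he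
    grind

lemma spl_prod (h : Good c w A σ) {W : Finset (Fin k)} (hW : W ∈ σ) {r : Fin k}
    (hp : p ∈ W) (hr : r ∈ W) (hne : r ≠ p) :
    ∏ S ∈ spl W p r σ, wtB S.card = (wtB (cnt W (min p r) (max p r)) *
      wtB (W.card - cnt W (min p r) (max p r))) * ∏ S ∈ σ.erase W, wtB S.card := by
  obtain ⟨⟨x, hx⟩, ⟨y, hy⟩⟩ := piece_ne hp hr hne
  have hn : ∀ S ∈ σ.erase W, ∀ x ∈ W, x ∉ S := by
    intro S hS x hx hxS
    rw [Finset.mem_erase] at hS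
    exact hS.1 (h.uniq S hS.2 W hW x hxS hx)
  unfold spl
  rw [Finset.prod_insert, Finset.prod_insert, Finset.card_sdiff_of_subset piece_sub, mul_assoc]
  · rfl
  · intro h1
    exact hn _ h1 y (Finset.sdiff_subset hy) hy
  · rw [Finset.mem_insert, not_or]
    refine ⟨?_, ?_⟩
    · intro h1
      rw [← h1] at hy
      rw [h1] at hy
      have := hy
      rw [← h1] at this
      exact (Finset.mem_sdiff.1 hy).2 this
    · intro h1
      exact hn _ h1 x (piece_sub hx) hx

lemma spl_blk (h : Good c w A σ) {W : Finset (Fin k)} (hW : W ∈ σ) {r : Fin k}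
    (hp : p ∈ W) (hq : q ∈ W) (hr : r ∈ W) (hne : r ≠ p) (hw : w r = w p) (hpq : p < q)
    (hadj : ∀ x ∈ A, ¬ (p < x ∧ x < q)) :
    (r < p ∧ blk (spl W p r σ) p = piece W p r ∧ blk (spl W p r σ) q = W \ piece W p r) ∨
    (p < r ∧ blk (spl W p r σ) q = piece W p r ∧ blk (spl W p r σ) p = W \ piece W p r) := by
  have hg := good_spl h hW hp hr hne hw
  have m1 : piece W p r ∈ spl W p r σ := by simp [spl]
  have m2 : W \ piece W p r ∈ spl W p r σ := by simp [spl]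
  rcases lt_or_gt_of_ne hne with h1 | h1
  · refine Or.inl ⟨h1, blk_eq hg m1 ?_, blk_eq hg m2 ?_⟩
    · simp [piece, hp, h1]
    · simp [piece, hq, h1.le, hpq]
  · have : q ≤ r := by
      have := hadj r ((h.cov r).2 ⟨W, hW, hr⟩)
      grind
    refine Or.inr ⟨h1, blk_eq hg m1 ?_, blk_eq hg m2 ?_⟩
    · simp [piece, hq, hpq, this]
    · simp [piece, hp, h1.le]

lemma mrg_spl (h : Good c w A σ) {W : Finset (Fin k)} (hW : W ∈ σ) {r : Fin k}
    (hp : p ∈ W) (hq : q ∈ W) (hr : r ∈ W) (hne : r ≠ p) (hw : w r = w p) (hpq : p < q)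
    (hadj : ∀ x ∈ A, ¬ (p < x ∧ x < q)) : mrg p q (spl W p r σ) = σ := by
  obtain ⟨⟨x, hx⟩, ⟨y, hy⟩⟩ := piece_ne hp hr hne
  have hn : ∀ S ∈ σ, S ≠ W → ∀ x ∈ W, x ∉ S := by
    intro S hS hSW x hx hxS
    exact hSW (h.uniq S hS W hW x hxS hx)
  have k1 : ∀ S ∈ σ, S ≠ W → S ≠ piece W p r := by
    rintro S hS hSW rfl
    exact hn _ hS hSW x (piece_sub hx) hx
  have k2 : ∀ S ∈ σ, S ≠ W → S ≠ W \ piece W p r := by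
    rintro S hS hSW rfl
    exact hn _ hS hSW y (Finset.sdiff_subset hy) hy
  have hu : piece W p r ∪ (W \ piece W p r) = W := Finset.union_sdiff_of_subset piece_sub
  have hu' : (W \ piece W p r) ∪ piece W p r = W := Finset.sdiff_union_of_subset piece_sub
  unfold mrg
  ext S
  rcases spl_blk h hW hp hq hr hne hw hpq hadj with ⟨_, e1, e2⟩ | ⟨_, e1, e2⟩
  · rw [e1, e2, hu]
    simp only [spl, Finset.mem_insert, Finset.mem_erase]
    have := k1 S
    have := k2 S
    grind
  · rw [e1, e2, hu']
    simp only [spl, Finset.mem_insert, Finset.mem_erase]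
    have := k1 S
    have := k2 S
    grind

lemma pair_alt (hpq : p < q) (hc : c p = c q) (hw : w p ≠ w q) : AltB c w {p, q} := by
  have e0 : ∀ x : Fin k, cnt {p, q} x x = 0 := fun x => cnt_zero (by
    rintro y - ⟨h1, h2⟩; order)
  have e1 : cnt {p, q} p q = 1 := by
    unfold cnt
    rw [Finset.card_eq_one]
    refine ⟨q, ?_⟩
    ext x
    simp only [Finset.mem_filter, Finset.mem_singleton, Finset.mem_insert]
    grind
  refine ⟨?_, ?_, ?_⟩
  · rw [Finset.card_pair hpq.ne]; exact even_two
  · intro s hs t ht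
    simp only [Finset.mem_singleton, Finset.mem_insert] at hs ht
    grind
  · intro s hs t ht hst
    simp only [Finset.mem_singleton, Finset.mem_insert] at hs ht
    rcases hs with rfl | rfl <;> rcases ht with rfl | rfl
    · simp [e0]
    · simp [e1, hw]
    · exact absurd hpq (by order)
    · simp [e0]

lemma sum_X (hp : p ∈ A) (hq : q ∈ A) (hpq : p < q)
    (hadj : ∀ x ∈ A, ¬ (p < x ∧ x < q)) (hc : c p = c q) (hw : w p ≠ w q) :
    ∑ π ∈ (GS c w A).filter (fun π => {p, q} ∈ π), ∏ S ∈ π, wtB S.card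
      = ∑ π ∈ GS c w (A \ {p, q}), ∏ S ∈ π, wtB S.card := by
  have hnot : ∀ π, Good c w (A \ {p, q}) π → {p, q} ∉ π := by
    intro π h hm
    have := (h.cov p).2 ⟨_, hm, by simp⟩
    simp at this
  refine Finset.sum_nbij' (fun π => π.erase {p, q}) (fun π => insert {p, q} π) ?_ ?_ ?_ ?_ ?_
  · intro π hπ
    rw [Finset.mem_filter, mem_GS] at hπ
    obtain ⟨h, hm⟩ := hπ
    rw [mem_GS]
    constructor
    · intro S hS; exact h.ne S (Finset.mem_of_mem_erase hS)
    · intro t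
      rw [Finset.mem_sdiff, h.cov t]
      constructor
      · rintro ⟨⟨S, hS, ht⟩, ht'⟩
        refine ⟨S, ?_, ht⟩
        rw [Finset.mem_erase]
        exact ⟨fun e => ht' (e ▸ ht), hS⟩
      · rintro ⟨S, hS, ht⟩
        rw [Finset.mem_erase] at hS
        exact ⟨⟨S, hS.2, ht⟩, fun h' => hS.1 (h.uniq S hS.2 _ hm t ht h')⟩
    · intro S hS T hT
      exact h.uniq S (Finset.mem_of_mem_erase hS) T (Finset.mem_of_mem_erase hT)
    · intro S hS T hT
      exact h.nc S (Finset.mem_of_mem_erase hS) T (Finset.mem_of_mem_erase hT)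
    · intro S hS; exact h.alt S (Finset.mem_of_mem_erase hS)
  · intro π hπ
    rw [mem_GS] at hπ
    rw [Finset.mem_filter, mem_GS]
    have hS' : ∀ S ∈ π, ∀ x ∈ S, x ∈ A ∧ x ≠ p ∧ x ≠ q := by
      intro S hS x hx
      have := (hπ.cov x).2 ⟨S, hS, hx⟩
      simpa using this
    refine ⟨?_, by simp⟩
    constructor
    · intro S hS
      rcases Finset.mem_insert.1 hS with rfl | hS
      · simp
      · exact hπ.ne S hS
    · intro t
      constructor
      · intro ht
        by_cases h1 : t ∈ ({p, q} : Finset (Fin k))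
        · exact ⟨_, Finset.mem_insert_self _ _, h1⟩
        · obtain ⟨S, hS, h2⟩ := (hπ.cov t).1 (Finset.mem_sdiff.2 ⟨ht, h1⟩)
          exact ⟨S, Finset.mem_insert_of_mem hS, h2⟩
      · rintro ⟨S, hS, ht⟩
        rcases Finset.mem_insert.1 hS with rfl | hS
        · simp only [Finset.mem_insert, Finset.mem_singleton] at ht
          rcases ht with rfl | rfl <;> assumption
        · exact (hS' S hS t ht).1
    · intro S hS T hT t h1 h2
      rcases Finset.mem_insert.1 hS with rfl | hS <;> rcases Finset.mem_insert.1 hT with rfl | hT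
      · rfl
      · have := hS' T hT t h2; simp only [Finset.mem_insert, Finset.mem_singleton] at h1; tauto
      · have := hS' S hS t h1; simp only [Finset.mem_insert, Finset.mem_singleton] at h2; tauto
      · exact hπ.uniq S hS T hT t h1 h2
    · intro S hS T hT hST
      rcases Finset.mem_insert.1 hS with rfl | hS <;> rcases Finset.mem_insert.1 hT with rfl | hT
      · exact absurd rfl hST
      · intro a ha b hb c' hc e he h1 h2 h3
        have := hS' T hT b hb
        have := hadj b this.1
        simp only [Finset.mem_insert, Finset.mem_singleton] at ha hc
        grind
      · intro a ha b hb c' hc e he h1 h2 h3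
        have := hS' S hS c' hc
        have := hadj c' this.1
        simp only [Finset.mem_insert, Finset.mem_singleton] at hb he
        grind
      · exact hπ.nc S hS T hT hST
    · intro S hS
      rcases Finset.mem_insert.1 hS with rfl | hS
      · exact pair_alt hpq hc hw
      · exact hπ.alt S hS
  · intro π hπ
    rw [Finset.mem_filter] at hπ
    exact Finset.insert_erase hπ.2
  · intro π hπ
    exact Finset.erase_insert (hnot π (mem_GS.1 hπ))
  · intro π hπ
    rw [Finset.mem_filter] at hπ
    rw [← Finset.mul_prod_erase π _ hπ.2, Finset.card_pair hpq.ne]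
    simp [wtB]

lemma sum_Z (hp : p ∈ A) (hq : q ∈ A) (hpq : p < q)
    (hadj : ∀ x ∈ A, ¬ (p < x ∧ x < q)) (hc : c p = c q) (hw : w p ≠ w q) :
    ∑ π ∈ (GS c w A).filter (fun π => q ∉ blk π p), ∏ S ∈ π, wtB S.card
      = ∑ σ ∈ (GS c w A).filter (fun π => q ∈ blk π p ∧ {p, q} ∉ π),
          - ∏ S ∈ σ, wtB S.card := by
  have inner : ∀ σ ∈ (GS c w A).filter (fun π => q ∈ blk π p ∧ {p, q} ∉ π),
      - ∏ S ∈ σ, wtB S.card = ∑ r ∈ (blk σ p).filter (fun r => r ≠ p ∧ w r = w p),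
        ∏ S ∈ spl (blk σ p) p r σ, wtB S.card := by
    intro σ hσ
    rw [Finset.mem_filter, mem_GS] at hσ
    obtain ⟨hg, hqb, hn⟩ := hσ
    obtain ⟨b1, b2⟩ := blk_mem hg hp
    have halt := hg.alt _ b1
    have hsub : ({p, q} : Finset (Fin k)) ⊆ blk σ p := by
      intro x hx
      simp only [Finset.mem_insert, Finset.mem_singleton] at hx
      rcases hx with rfl | rfl <;> assumption
    have h4 : 4 ≤ (blk σ p).card := by
      have hss : ({p, q} : Finset (Fin k)) ⊂ blk σ p :=
        Finset.ssubset_iff_subset_ne.2 ⟨hsub, fun e => hn (e ▸ b1)⟩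
      have := Finset.card_lt_card hss
      rw [Finset.card_pair hpq.ne] at this
      have := halt.1
      rw [Nat.even_iff] at this
      omega
    have loc := local_sum halt h4 b2
    rw [← Finset.mul_prod_erase σ _ b1, ← neg_mul, ← loc, Finset.sum_mul]
    refine Finset.sum_congr rfl ?_
    intro r hr
    rw [Finset.mem_filter] at hr
    rw [spl_prod hg b1 b2 hr.1 hr.2.1]
  rw [Finset.sum_congr rfl inner, Finset.sum_sigma']
  symm
  refine Finset.sum_bij (fun x _ => spl (blk x.1 p) p x.2 x.1) ?_ ?_ ?_ ?_
  · rintro ⟨σ, r⟩ hx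
    simp only [Finset.mem_sigma, Finset.mem_filter, mem_GS] at hx
    obtain ⟨⟨hg, hqb, hn⟩, hr, hrp, hwr⟩ := hx
    obtain ⟨b1, b2⟩ := blk_mem hg hp
    rw [Finset.mem_filter, mem_GS]
    refine ⟨good_spl hg b1 b2 hr hrp hwr, ?_⟩
    have hgs := good_spl hg b1 b2 hr hrp hwr
    have hqm := (blk_mem hgs hq).2
    simp only
    rcases spl_blk hg b1 b2 hqb hr hrp hwr hpq hadj with ⟨_, e1, e2⟩ | ⟨_, e1, e2⟩
    · rw [e2] at hqm; rw [e1]; exact (Finset.mem_sdiff.1 hqm).2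
    · rw [e1] at hqm; rw [e2]; exact fun h => (Finset.mem_sdiff.1 h).2 hqm
  · rintro ⟨σ, r⟩ hx ⟨σ', r'⟩ hx' heq
    simp only [Finset.mem_sigma, Finset.mem_filter, mem_GS] at hx hx' heq
    obtain ⟨⟨hg, hqb, hn⟩, hr, hrp, hwr⟩ := hx
    obtain ⟨⟨hg', hqb', hn'⟩, hr', hrp', hwr'⟩ := hx'
    obtain ⟨b1, b2⟩ := blk_mem hg hp
    obtain ⟨b1', b2'⟩ := blk_mem hg' hp
    have e := mrg_spl hg b1 b2 hqb hr hrp hwr hpq hadj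
    have e' := mrg_spl hg' b1' b2' hqb' hr' hrp' hwr' hpq hadj
    rw [heq, e'] at e
    subst e
    have s1 := spl_blk hg b1 b2 hqb hr hrp hwr hpq hadj
    have s2 := spl_blk hg b1 b2 hqb hr' hrp' hwr' hpq hadj
    rw [heq] at s1
    generalize blk σ' p = W at *
    have hrr : r = r' := by
      rcases s1 with ⟨l1, x1, y1⟩ | ⟨l1, x1, y1⟩ <;> rcases s2 with ⟨l2, x2, y2⟩ | ⟨l2, x2, y2⟩
      · rw [x1] at x2
        have m1 := Finset.ext_iff.1 x2 r
        have m2 := Finset.ext_iff.1 x2 r'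
        simp only [piece, Finset.mem_filter] at m1 m2
        grind
      · rw [x1] at y2
        have m1 := Finset.ext_iff.1 y2 r
        have m2 := Finset.ext_iff.1 y2 r'
        simp only [piece, Finset.mem_filter, Finset.mem_sdiff] at m1 m2
        grind
      · rw [x2] at y1
        have m1 := Finset.ext_iff.1 y1 r
        have m2 := Finset.ext_iff.1 y1 r'
        simp only [piece, Finset.mem_filter, Finset.mem_sdiff] at m1 m2
        grind
      · rw [x1] at x2
        have m1 := Finset.ext_iff.1 x2 r
        have m2 := Finset.ext_iff.1 x2 r'
        simp only [piece, Finset.mem_filter] at m1 m2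
        grind
    rw [hrr]
  · intro π hπ
    rw [Finset.mem_filter, mem_GS] at hπ
    obtain ⟨hg, hqb⟩ := hπ
    obtain ⟨b1, b2⟩ := blk_mem hg hp
    obtain ⟨b3, b4⟩ := blk_mem hg hq
    have hne : blk π p ≠ blk π q := fun e => hqb (e ▸ b4)
    obtain ⟨halt, r, hr, hrp, hwr, hcut⟩ := exists_cut hg b1 b3 hne b2 b4 hpq hadj hc hw
    have hgm : Good c w A (mrg p q π) := good_merge hg b1 b3 b2 b4 hpq hadj halt
    have hWm : blk π p ∪ blk π q ∈ mrg p q π := by simp [mrg]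
    have hbm : blk (mrg p q π) p = blk π p ∪ blk π q := blk_eq hgm hWm (by simp [b2])
    have hdis : ∀ x, x ∈ blk π p → x ∈ blk π q → False :=
      fun x h1 h2 => hne (hg.uniq _ b1 _ b3 x h1 h2)
    have hWn : blk π p ∪ blk π q ∉ π := by
      intro h
      have e1 := hg.uniq _ h _ b1 p (by simp [b2]) b2
      apply hqb
      rw [← e1]; simp [b4]
    have hsp : spl (blk π p ∪ blk π q) p r (mrg p q π) = π := by
      have hpc : (piece (blk π p ∪ blk π q) p r = blk π p ∧
          (blk π p ∪ blk π q) \ piece (blk π p ∪ blk π q) p r = blk π q) ∨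
          (piece (blk π p ∪ blk π q) p r = blk π q ∧
          (blk π p ∪ blk π q) \ piece (blk π p ∪ blk π q) p r = blk π p) := by
        rcases hcut with e | e
        · left
          have e' : piece (blk π p ∪ blk π q) p r = blk π p := e
          refine ⟨e', ?_⟩
          rw [e']
          ext x
          have := hdis x
          simp only [Finset.mem_sdiff, Finset.mem_union]
          tauto
        · right
          have e' : piece (blk π p ∪ blk π q) p r = blk π q := e
          refine ⟨e', ?_⟩
          rw [e']
          ext x
          have := hdis x
          simp only [Finset.mem_sdiff, Finset.mem_union]
          tauto
      unfold spl
      have her : (mrg p q π).erase (blk π p ∪ blk π q) = (π.erase (blk π p)).erase (blk π q) := by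
        unfold mrg
        rw [Finset.erase_insert]
        intro h
        exact hWn (Finset.mem_of_mem_erase (Finset.mem_of_mem_erase h))
      rw [her]
      rcases hpc with ⟨e1, e2⟩ | ⟨e1, e2⟩
      · rw [e2, e1]
        ext S
        simp only [Finset.mem_insert, Finset.mem_erase]
        grind
      · rw [e2, e1]
        ext S
        simp only [Finset.mem_insert, Finset.mem_erase]
        grind
    refine ⟨⟨mrg p q π, r⟩, ?_, ?_⟩
    · simp only [Finset.mem_sigma, Finset.mem_filter, mem_GS]
      rw [hbm]
      refine ⟨⟨hgm, by simp [b4], ?_⟩, hr, hrp, hwr⟩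
      intro h
      have e1 := hgm.uniq _ h _ hWm p (by simp) (by simp [b2])
      have hrm := hr
      rw [← e1] at hrm
      simp only [Finset.mem_insert, Finset.mem_singleton] at hrm
      rcases hrm with rfl | rfl
      · exact hrp rfl
      · exact hw hwr.symm
    · simp only
      rw [hbm, hsp]
  · intros; rfl

lemma step (hp : p ∈ A) (hq : q ∈ A) (hpq : p < q)
    (hadj : ∀ x ∈ A, ¬ (p < x ∧ x < q)) (hc : c p = c q) (hw : w p ≠ w q) :
    ∑ π ∈ GS c w A, ∏ S ∈ π, wtB S.card
      = ∑ π ∈ GS c w (A \ {p, q}), ∏ S ∈ π, wtB S.card := by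
  rw [← Finset.sum_filter_add_sum_filter_not (GS c w A) (fun π => q ∈ blk π p),
    sum_Z hp hq hpq hadj hc hw, ← sum_X hp hq hpq hadj hc hw,
    ← Finset.sum_filter_add_sum_filter_not ((GS c w A).filter (fun π => q ∈ blk π p))
      (fun π => {p, q} ∈ π), Finset.filter_filter, Finset.filter_filter,
    Finset.sum_neg_distrib, add_neg_cancel_right]
  congr 1
  ext π
  simp only [Finset.mem_filter, mem_GS]
  constructor
  · tauto
  · rintro ⟨h1, h2⟩
    refine ⟨h1, ?_, h2⟩
    rw [blk_eq h1 h2 (by simp)]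
    simp

lemma exists_adj (h : Good c w A π) (hA : A.Nonempty) :
    ∃ p ∈ A, ∃ q ∈ A, p < q ∧ (∀ x ∈ A, ¬ (p < x ∧ x < q)) ∧ c p = c q ∧ w p ≠ w q := by
  have two : ∀ S ∈ π, ∀ s ∈ S, ∃ t ∈ S, t ≠ s := by
    intro S hS s hs
    have h1 := (h.alt S hS).1
    have h2 : 0 < S.card := Finset.card_pos.2 ⟨s, hs⟩
    rw [Nat.even_iff] at h1
    exact Finset.exists_mem_ne (by omega) s
  have key : ∀ n : ℕ, ∀ S ∈ π, ∀ s ∈ S, ∀ t ∈ S, s < t → (t : ℕ) - s = n →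
      ∃ p ∈ A, ∃ q ∈ A, p < q ∧ (∀ x ∈ A, ¬ (p < x ∧ x < q)) ∧ c p = c q ∧ w p ≠ w q := by
    intro n
    induction n using Nat.strong_induction_on with
    | _ n ih =>
      intro S hS s hs t ht hst hn
      by_cases hx : ∃ x ∈ A, s < x ∧ x < t
      · obtain ⟨x, hxA, hsx, hxt⟩ := hx
        obtain ⟨T, hT, hxT⟩ := (h.cov x).1 hxA
        have hsx' : (s : ℕ) < x := hsx
        have hxt' : (x : ℕ) < t := hxt
        by_cases hTS : T = S
        · subst hTS
          exact ih ((x : ℕ) - s) (by omega) T hS s hs x hxT hsx rfl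
        · obtain ⟨y, hy, hyx⟩ := two T hT x hxT
          have hys : y ≠ s := fun e => hTS (h.uniq T hT S hS y hy (e ▸ hs))
          have hyt : y ≠ t := fun e => hTS (h.uniq T hT S hS y hy (e ▸ ht))
          have h1 : s < y := by
            by_contra hc'
            exact h.nc T hT S hS hTS y hy s hs x hxT t ht (by grind) hsx hxt
          have h2 : y < t := by
            by_contra hc'
            exact h.nc S hS T hT (Ne.symm hTS) s hs x hxT t ht y hy hsx hxt (by grind)
          have h1' : (s : ℕ) < y := h1
          have h2' : (y : ℕ) < t := h2
          rcases lt_or_gt_of_ne hyx with h3 | h3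
          · exact ih ((x : ℕ) - y) (by omega) T hT y hy x hxT h3 rfl
          · exact ih ((y : ℕ) - x) (by omega) T hT x hxT y hy h3 rfl
      · push Not at hx
        have hsA := (h.cov s).2 ⟨S, hS, hs⟩
        have htA := (h.cov t).2 ⟨S, hS, ht⟩
        refine ⟨s, hsA, t, htA, hst, fun x hxA hx' => absurd hx'.2 (not_lt.2 (hx x hxA hx'.1)),
          (h.alt S hS).2.1 s hs t ht, ?_⟩
        have e1 : cnt S s t = 1 := by
          unfold cnt
          rw [Finset.card_eq_one]
          refine ⟨t, ?_⟩
          ext x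
          simp only [Finset.mem_filter, Finset.mem_singleton]
          constructor
          · rintro ⟨h1, h2, h3⟩
            exact le_antisymm h3 (hx x ((h.cov x).2 ⟨S, hS, h1⟩) h2)
          · rintro rfl; exact ⟨ht, hst, le_rfl⟩
        have := (h.alt S hS).2.2 s hs t ht hst.le
        rw [e1] at this
        intro e
        simpa using this.1 e
  obtain ⟨x, hx⟩ := hA
  obtain ⟨S, hS, hxS⟩ := (h.cov x).1 hx
  obtain ⟨y, hy, hyx⟩ := two S hS x hxS
  rcases lt_or_gt_of_ne hyx with h3 | h3
  · exact key _ S hS y hy x hxS h3 rfl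
  · exact key _ S hS x hxS y hy h3 rfl

end

/-! ### Words in the free group -/

lemma word_sum {k : ℕ} {Γ : Type} (c : Fin k → Γ) (w : Fin k → Bool) :
    ∀ n : ℕ, ∀ l : List (Fin k), l.length = n → l.Pairwise (· < ·) →
      ((FreeGroup.mk (l.map fun t => (c t, w t)) = 1 →
        ∑ π ∈ GS c w l.toFinset, ∏ S ∈ π, wtB S.card = 1) ∧
      (FreeGroup.mk (l.map fun t => (c t, w t)) ≠ 1 →
        ∑ π ∈ GS c w l.toFinset, ∏ S ∈ π, wtB S.card = 0)) := by
  intro n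
  induction n using Nat.strong_induction_on with
  | _ n ih =>
    intro l hl hs
    by_cases hdec : ∃ l₁ l₂ : List (Fin k), ∃ p q : Fin k, l = l₁ ++ p :: q :: l₂ ∧
        c p = c q ∧ w p ≠ w q
    · obtain ⟨l₁, l₂, p, q, rfl, hc, hw⟩ := hdec
      have hwq : w q = !(w p) := by
        revert hw; cases w p <;> cases w q <;> simp
      have hmk : FreeGroup.mk ((l₁ ++ p :: q :: l₂).map fun t => (c t, w t))
          = FreeGroup.mk ((l₁ ++ l₂).map fun t => (c t, w t)) := by
        simp only [List.map_append, List.map_cons]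
        rw [← hc, hwq]
        exact Quot.sound FreeGroup.Red.Step.not
      have hs' := hs
      rw [List.pairwise_append] at hs'
      obtain ⟨s1, s2, s3⟩ := hs'
      rw [List.pairwise_cons, List.pairwise_cons] at s2
      obtain ⟨t1, t2, t3⟩ := s2
      have hpq : p < q := t1 q (by simp)
      have hsub : (l₁ ++ l₂).Pairwise (· < ·) := by
        refine hs.sublist ?_
        exact List.Sublist.append_left
          ((List.sublist_cons_self q l₂).trans (List.sublist_cons_self p _)) l₁
      have hset : (l₁ ++ p :: q :: l₂).toFinset \ {p, q} = (l₁ ++ l₂).toFinset := by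
        ext x
        have a1 := fun h => s3 x h p (by simp)
        have a2 := fun h => s3 x h q (by simp)
        have a3 := fun h => t1 x (List.mem_cons_of_mem q h)
        have a4 := t2 x
        simp only [Finset.mem_sdiff, List.mem_toFinset, List.mem_append, List.mem_cons,
          Finset.mem_insert, Finset.mem_singleton]
        grind
      have hstep := step (c := c) (w := w) (A := (l₁ ++ p :: q :: l₂).toFinset) (p := p) (q := q)
        (by simp) (by simp) hpq (by
          intro x hx
          have a1 := fun h => s3 x h p (by simp)
          have a4 := t2 x
          simp only [List.mem_toFinset, List.mem_append, List.mem_cons] at hx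
          grind) hc hw
      rw [hstep, hset, hmk]
      exact ih (l₁ ++ l₂).length (by rw [← hl]; simp) (l₁ ++ l₂) rfl hsub
    · by_cases hnil : l = []
      · subst hnil
        have : GS c w ([] : List (Fin k)).toFinset = {∅} := by
          ext π
          rw [mem_GS, Finset.mem_singleton]
          constructor
          · intro h
            rw [Finset.eq_empty_iff_forall_notMem]
            intro S hS
            obtain ⟨x, hx⟩ := h.ne S hS
            have := (h.cov x).2 ⟨S, hS, hx⟩
            simp at this
          · rintro rfl
            constructor <;> simp
        rw [this]
        refine ⟨by simp, ?_⟩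
        intro h
        exact absurd (by simp [FreeGroup.one_eq_mk]) h
      · have hred : FreeGroup.IsReduced (l.map fun t => (c t, w t)) := by
          rw [FreeGroup.isReduced_iff_not_step]
          intro L₂ hst
          generalize hL : (l.map fun t => (c t, w t)) = L at hst
          cases hst with
          | @not L₁ L₂ x b =>
            obtain ⟨l₁, l', rfl, h1, h2⟩ := List.map_eq_append_iff.1 hL
            obtain ⟨p, l'', rfl, h3, h4⟩ := List.map_eq_cons_iff.1 h2
            obtain ⟨q, l₂, rfl, h5, h6⟩ := List.map_eq_cons_iff.1 h4
            apply hdec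
            simp only [Prod.mk.injEq] at h3 h5
            refine ⟨l₁, l₂, p, q, rfl, by rw [h3.1, h5.1], ?_⟩
            rw [h3.2, h5.2]; simp
        have hne1 : FreeGroup.mk (l.map fun t => (c t, w t)) ≠ 1 := by
          rw [FreeGroup.one_eq_mk]
          intro h
          obtain ⟨L', h1, h2⟩ := FreeGroup.Red.exact.1 h
          rw [hred.red_iff_eq] at h1
          rw [FreeGroup.Red.nil_iff] at h2
          rw [h1] at h2
          exact hnil (by simpa using h2)
        refine ⟨fun h => absurd h hne1, fun _ => ?_⟩
        have : GS c w l.toFinset = ∅ := by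
          rw [Finset.eq_empty_iff_forall_notMem]
          intro π hπ
          rw [mem_GS] at hπ
          obtain ⟨p, hp, q, hq, hpq, hadj, hc, hw⟩ := exists_adj hπ (by
            rw [List.toFinset_nonempty_iff]; exact hnil)
          rw [List.mem_toFinset] at hp hq
          obtain ⟨l₁, l', rfl⟩ := List.append_of_mem hp
          have hs' := hs
          rw [List.pairwise_append] at hs'
          obtain ⟨s1, s2, s3⟩ := hs'
          rw [List.pairwise_cons] at s2
          have hq' : q ∈ l' := by
            have := fun h => s3 q h p (by simp)
            simp only [List.mem_append, List.mem_cons] at hq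
            grind
          cases l' with
          | nil => simp at hq'
          | cons y l₂ =>
            have hy : y = q := by
              rcases List.mem_cons.1 hq' with h | h
              · exact h.symm
              · exfalso
                have h1 := (List.pairwise_cons.1 s2.2).1 q h
                exact hadj y (by simp) ⟨s2.1 y (by simp), h1⟩
            subst hy
            exact hdec ⟨l₁, l₂, p, y, rfl, hc, hw⟩
        rw [this, Finset.sum_empty]

/-! ### Comparison with the definitions of the statement -/

lemma altList_iff {k : ℕ} (w : Fin k → Bool) (S : Finset (Fin k)) :
    IsAltList ((S.sort (· ≤ ·)).map w) ↔
      (Even S.card ∧ ∀ s ∈ S, ∀ t ∈ S, s ≤ t → (w s = w t ↔ Even (cnt S s t))) := by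
  have hlen : ((S.sort (· ≤ ·)).map w).length = S.card := by simp
  set e := S.orderEmbOfFin rfl with he
  have hget : ∀ m (h : m < ((S.sort (· ≤ ·)).map w).length),
      ((S.sort (· ≤ ·)).map w).get ⟨m, h⟩ = w (e ⟨m, hlen ▸ h⟩) := by
    intro m h
    simp [he, Finset.orderEmbOfFin_apply]
  have hsurj : ∀ x ∈ S, ∃ m, e m = x := by
    intro x hx
    have : x ∈ Set.range (S.orderEmbOfFin rfl) := by
      rw [Finset.range_orderEmbOfFin]; exact hx
    exact this
  have hcnt : ∀ i j, cnt S (e i) (e j) = (j : ℕ) - i := fun i j => cnt_emb S i j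
  have hmem : ∀ i, e i ∈ S := fun i => Finset.orderEmbOfFin_mem S rfl i
  unfold IsAltList
  refine and_congr (by rw [hlen, Nat.even_iff]) ?_
  have hQ : (∀ s ∈ S, ∀ t ∈ S, s ≤ t → (w s = w t ↔ Even (cnt S s t))) ↔
      ∀ i j : Fin S.card, i ≤ j → (w (e i) = w (e j) ↔ ((j : ℕ) - i) % 2 = 0) := by
    constructor
    · intro h i j hij
      have := h _ (hmem i) _ (hmem j) (by simpa using hij)
      rwa [hcnt, Nat.even_iff] at this
    · intro h s hs t ht hst
      obtain ⟨i, rfl⟩ := hsurj s hs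
      obtain ⟨j, rfl⟩ := hsurj t ht
      rw [hcnt, Nat.even_iff]
      exact h i j (by simpa using hst)
  rw [hQ]
  have hP : ∀ ε : ℕ, (∀ m (h : m < ((S.sort (· ≤ ·)).map w).length),
      ((S.sort (· ≤ ·)).map w).get ⟨m, h⟩ = decide (m % 2 = ε)) ↔
      ∀ i : Fin S.card, w (e i) = decide ((i : ℕ) % 2 = ε) := by
    intro ε
    constructor
    · intro h i
      have := h i (by rw [hlen]; exact i.2)
      rwa [hget] at this
    · intro h m hm
      rw [hget]
      exact h _
  have h0 := hP 0
  have h1 := hP 1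
  rw [h0, h1]
  constructor
  · rintro (h | h) i j hij
    · rw [h i, h j, decide_eq_decide]
      have : (i : ℕ) ≤ j := hij
      omega
    · rw [h i, h j, decide_eq_decide]
      have : (i : ℕ) ≤ j := hij
      omega
  · intro h
    by_cases hpos : 0 < S.card
    · have h' := fun j => h ⟨0, hpos⟩ j (Nat.zero_le _)
      simp only [Nat.sub_zero] at h'
      cases hw0 : w (e ⟨0, hpos⟩)
      · right
        intro j
        have hj := h' j
        rw [hw0] at hj
        cases hwj : w (e j)
        · rw [hwj] at hj
          have := hj.1 rfl
          symm; rw [decide_eq_false_iff_not]; omega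
        · rw [hwj] at hj
          have : ¬ ((j : ℕ) % 2 = 0) := fun h => by simpa using hj.2 h
          symm; rw [decide_eq_true_iff]; omega
      · left
        intro j
        have hj := h' j
        rw [hw0] at hj
        cases hwj : w (e j)
        · rw [hwj] at hj
          have : ¬ ((j : ℕ) % 2 = 0) := fun h => by simpa using hj.2 h
          symm; rw [decide_eq_false_iff_not]; omega
        · rw [hwj] at hj
          have := hj.1 rfl
          symm; rw [decide_eq_true_iff]; omega
    · left
      intro i
      exact absurd i.2 (by omega)

/-- The colouring `i` is constant on the blocks of `π`. -/
def Mono {d k : ℕ} (i : Fin k → Fin d) (π : Finset (Finset (Fin k))) : Prop :=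
  ∀ S ∈ π, ∀ s ∈ S, ∀ t ∈ S, i s = i t

lemma good_iff {d k : ℕ} (i : Fin k → Fin d) (w : Fin k → Bool) (π : Finset (Finset (Fin k))) :
    Good i w Finset.univ π ↔
      ((IsPartitionF π ∧ NonCrossingF π ∧ AltBlocks w π) ∧ Mono i π) := by
  constructor
  · intro h
    refine ⟨⟨⟨?_, ?_⟩, ?_, ?_⟩, ?_⟩
    · intro h0
      simpa using h.ne ∅ h0
    · intro t
      obtain ⟨S, hS, ht⟩ := (h.cov t).1 (Finset.mem_univ t)
      exact ⟨S, ⟨hS, ht⟩, fun T hT => h.uniq T hT.1 S hS t hT.2 ht⟩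
    · rintro a b c e hab hbc hce ⟨S, hS, haS, hcS⟩ ⟨T, hT, hbT, heT⟩
      by_cases hST : S = T
      · subst hST; exact ⟨S, hS, haS, hbT⟩
      · exact (h.nc S hS T hT hST a haS b hbT c hcS e heT hab hbc hce).elim
    · intro S hS
      rw [altList_iff]
      exact ⟨(h.alt S hS).1, (h.alt S hS).2.2⟩
    · intro S hS
      exact (h.alt S hS).2.1
  · rintro ⟨⟨⟨h1, h2⟩, h3, h4⟩, h5⟩
    have huniq : ∀ S ∈ π, ∀ T ∈ π, ∀ t, t ∈ S → t ∈ T → S = T := by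
      intro S hS T hT t htS htT
      exact (h2 t).unique ⟨hS, htS⟩ ⟨hT, htT⟩
    constructor
    · intro S hS
      rw [Finset.nonempty_iff_ne_empty]
      rintro rfl
      exact h1 hS
    · intro t
      obtain ⟨S, hS, -⟩ := h2 t
      simp only [Finset.mem_univ, true_iff]
      exact ⟨S, hS.1, hS.2⟩
    · exact huniq
    · intro S hS T hT hST a ha b hb c hc e he hab hbc hce
      obtain ⟨U, hU, haU, hbU⟩ := h3 a b c e hab hbc hce ⟨S, hS, ha, hc⟩ ⟨T, hT, hb, he⟩
      exact hST ((huniq S hS U hU a ha haU).trans (huniq U hU T hT b hbU hb))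
    · intro S hS
      have := (altList_iff w S).1 (h4 S hS)
      exact ⟨this.1, h5 S hS, this.2⟩

open Classical in
lemma card_mono {d k : ℕ} (π : Finset (Finset (Fin k))) (hπ : IsPartitionF π) :
    (Finset.univ.filter fun i : Fin k → Fin d => Mono i π).card = d ^ π.card := by
  have hcard : Fintype.card (π → Fin d) = d ^ π.card := by simp
  rw [← hcard, ← Finset.card_univ]
  obtain ⟨h1, h2⟩ := hπ
  choose b hb hbu using h2
  have hne : ∀ S : π, S.1.Nonempty := by
    rintro ⟨S, hS⟩
    rw [Finset.nonempty_iff_ne_empty]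
    rintro rfl
    exact h1 hS
  choose f hf using hne
  have hbf : ∀ S : π, b (f S) = S.1 := fun S => (hbu (f S) S.1 ⟨S.2, hf S⟩).symm
  symm
  refine Finset.card_nbij' (fun g t => g ⟨b t, (hb t).1⟩) (fun i S => i (f S)) ?_ ?_ ?_ ?_
  · intro g _
    simp only [Finset.coe_filter, Finset.mem_univ, true_and, Set.mem_ofPred_eq]
    intro S hS s hs t ht
    have e1 : b s = S := (hbu s S ⟨hS, hs⟩).symm
    have e2 : b t = S := (hbu t S ⟨hS, ht⟩).symm
    simp only [e1, e2]
  · intro i _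
    simp
  · intro g _
    funext S
    simp only [hbf]
  · intro i hi
    simp only [Finset.coe_filter, Finset.mem_univ, true_and, Set.mem_ofPred_eq] at hi
    funext t
    exact hi _ (hb t).1 _ (hf ⟨b t, (hb t).1⟩) _ (hb t).2

lemma wprod_eq {d k : ℕ} (w : Fin k → Bool) (i : Fin k → Fin d) :
    wprod w i = FreeGroup.mk ((List.finRange k).map fun t => (i t, w t)) := by
  have hg : ∀ b j, gens d b j = FreeGroup.mk [(j, b)] := by
    intro b j
    cases b
    · simp [gens, FreeGroup.of, FreeGroup.inv_mk, FreeGroup.invRev]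
    · simp [gens, FreeGroup.of]
  unfold wprod
  rw [List.ofFn_eq_map]
  induction List.finRange k with
  | nil => rfl
  | cons a l ih =>
    rw [List.map_cons, List.prod_cons, ih, hg, FreeGroup.mul_mk]
    rfl

theorem star_moment_formula (d k : ℕ) (hd : 2 ≤ d) (w : Fin k → Bool) :
    (Mword d w : ℤ) =
      ∑ π ∈ ANC w,
        (∏ S ∈ π, (-1 : ℤ) ^ (S.card / 2 - 1) * (catalan (S.card / 2 - 1) : ℤ)) *
          (d : ℤ) ^ π.card := by
  classical
  have hM : (Mword d w : ℤ) = ∑ i : Fin k → Fin d, if wprod w i = 1 then (1 : ℤ) else 0 := by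
    unfold Mword
    rw [Nat.card_eq_fintype_card, Fintype.card_subtype, Finset.sum_boole]
  have hi : ∀ i : Fin k → Fin d, (if wprod w i = 1 then (1 : ℤ) else 0)
      = ∑ π ∈ ANC w, if Mono i π then ∏ S ∈ π, wtB S.card else 0 := by
    intro i
    have hword := word_sum i w _ (List.finRange k) rfl (List.pairwise_lt_finRange k)
    rw [← wprod_eq] at hword
    have huniv : (List.finRange k).toFinset = Finset.univ := by ext x; simp
    rw [huniv] at hword
    have hG : GS i w Finset.univ = (ANC w).filter (fun π => Mono i π) := by
      ext π
      rw [mem_GS, good_iff, Finset.mem_filter]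
      simp [ANC]
    rw [hG, Finset.sum_filter] at hword
    split_ifs with h
    · exact (hword.1 h).symm
    · exact (hword.2 h).symm
  rw [hM, Finset.sum_congr rfl (fun i _ => hi i), Finset.sum_comm]
  refine Finset.sum_congr rfl fun π hπ => ?_
  rw [← Finset.sum_filter, Finset.sum_const, card_mono π (by
    simp only [ANC, Finset.mem_filter] at hπ
    exact hπ.2.1)]
  rw [nsmul_eq_mul, mul_comm]
  push_cast
  rfl
end

section
/- Let d ≥ 1, k ≥ 2, w = w_1⋯w_k ∈ Σ^k, and (i_1,…,i_k) ∈ {1,…,d}^k. Define the partial products v_j := g_{i_1}^{w_1}⋯g_{i_j}^{w_j} in the free group F_d. If v_k = 1 and v_j ≠ 1 for all 1 ≤ j ≤ k−1 (the path first returns to the identity exactly at time k), then i_1 = i_k and w_1 ≠ w_k. -/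
/-- The partial product `v_m := g_{i_1}^{w_1} ⋯ g_{i_m}^{w_m}` in the free group `F_d`. -/
def pProd {d k : ℕ} (w : Fin k → Bool) (i : Fin k → Fin d) (m : ℕ) : FreeGroup (Fin d) :=
  ((List.ofFn fun t => gens d (w t) (i t)).take m).prod

theorem gens_eq_mk (d : ℕ) (b : Bool) (i : Fin d) : gens d b i = FreeGroup.mk [(i, b)] := by
  cases b <;> simp [gens, FreeGroup.of, FreeGroup.inv_mk, FreeGroup.invRev]

/-- Left multiplication by a letter keeps the last letter, unless the word becomes trivial. -/
theorem getLast_letter_mul {α : Type*} [DecidableEq α] (a : α × Bool) (x : FreeGroup α)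
    (hx : x ≠ 1) (hax : FreeGroup.mk [a] * x ≠ 1) :
    (FreeGroup.mk [a] * x).toWord.getLast? = x.toWord.getLast? := by
  have h1 : (FreeGroup.mk [a] * x).toWord = FreeGroup.reduce (a :: x.toWord) := by
    rw [FreeGroup.toWord_mul]; simp
  rw [Ne, ← FreeGroup.toWord_eq_nil_iff] at hx hax
  rw [h1] at hax ⊢
  rw [FreeGroup.reduce.cons, FreeGroup.reduce_toWord] at hax ⊢
  rcases hL : x.toWord with _ | ⟨b, l⟩
  · exact absurd hL hx
  · rw [hL] at hax
    simp only at hax ⊢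
    split_ifs at hax ⊢ with h
    · cases l with
      | nil => exact absurd rfl hax
      | cons c l => simp
    · simp

theorem pProd_succ {d k : ℕ} (w : Fin k → Bool) (i : Fin k → Fin d) (m : ℕ) (hm : m < k) :
    pProd w i (m + 1) = pProd w i m * gens d (w ⟨m, hm⟩) (i ⟨m, hm⟩) := by
  unfold pProd
  rw [List.prod_take_succ _ _ (by simpa using hm)]
  simp

theorem pProd_succ_inv {d k : ℕ} (w : Fin k → Bool) (i : Fin k → Fin d) (m : ℕ) (hm : m < k) :
    (pProd w i (m + 1))⁻¹ = FreeGroup.mk [(i ⟨m, hm⟩, !w ⟨m, hm⟩)] * (pProd w i m)⁻¹ := by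
  rw [pProd_succ w i m hm, mul_inv_rev, gens_eq_mk]
  simp [FreeGroup.inv_mk, FreeGroup.invRev]

theorem pProd_getLast {d k : ℕ} (w : Fin k → Bool) (i : Fin k → Fin d) (hk : 0 < k)
    (hfirst : ∀ j, 1 ≤ j → j ≤ k - 1 → pProd w i j ≠ 1) (m : ℕ) (hm : m + 1 ≤ k - 1) :
    (pProd w i (m + 1))⁻¹.toWord.getLast? = some (i ⟨0, hk⟩, !w ⟨0, hk⟩) := by
  induction m with
  | zero =>
    rw [pProd_succ_inv w i 0 hk]
    simp [pProd]
  | succ n ih =>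
    have hn := inv_ne_one.mpr (hfirst (n + 1) (by omega) (by omega))
    have hn' := inv_ne_one.mpr (hfirst (n + 1 + 1) (by omega) hm)
    rw [pProd_succ_inv w i (n + 1) (by omega)] at hn' ⊢
    rw [getLast_letter_mul _ _ hn hn']
    exact ih (by omega)

/-- If the path first returns to the identity exactly at time `k` (i.e. `v_k = 1` and
`v_j ≠ 1` for `1 ≤ j ≤ k-1`), then `i_1 = i_k` and `w_1 ≠ w_k`. -/
theorem first_return_matching (d k : ℕ) (hd : 1 ≤ d) (hk : 2 ≤ k)
    (w : Fin k → Bool) (i : Fin k → Fin d)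
    (hret : pProd w i k = 1)
    (hfirst : ∀ j, 1 ≤ j → j ≤ k - 1 → pProd w i j ≠ 1) :
    i ⟨0, by omega⟩ = i ⟨k - 1, by omega⟩ ∧ w ⟨0, by omega⟩ ≠ w ⟨k - 1, by omega⟩ := by
  obtain ⟨n, rfl⟩ : ∃ n, k = n + 2 := ⟨k - 2, by omega⟩
  have h := pProd_getLast w i (by omega) hfirst n (by omega)
  have e : (pProd w i (n + 1))⁻¹ = FreeGroup.mk [(i ⟨n + 1, by omega⟩, w ⟨n + 1, by omega⟩)] := by
    rw [pProd_succ w i (n + 1) (by omega), gens_eq_mk] at hret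
    exact inv_eq_of_mul_eq_one_right hret
  rw [e] at h
  have h' : (i ⟨n + 1, by omega⟩, w ⟨n + 1, by omega⟩) =
      (i ⟨0, by omega⟩, !w ⟨0, by omega⟩) := by
    simpa using h
  rw [Prod.mk.injEq] at h'
  refine ⟨h'.1.symm, ?_⟩
  intro hw
  have h2 := h'.2
  have hw' : w ⟨0, by omega⟩ = w ⟨n + 1, by omega⟩ := hw
  rw [← hw'] at h2
  simp at h2
end

section
/- Fix integers d ≥ 2 and k ≥ 1. For each n ≥ d+1, let G_{d,n} be a digraph drawn uniformly at random from the set of all d-regular digraphs on {1,…,n}. Then (1/n)·E[c_k(G_{d,n})] → 0 as n → ∞, where c_k is the number of plain cycles of length k. -/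
/-- The signed pair `(a,b)^w`: `(a,b)` if `w = 1` and `(b,a)` if `w = *`. -/
def sp {V : Type*} (b : Bool) (a c : V) : V × V := if b then (a, c) else (c, a)

open Classical in
/-- `2j` times the number of plain cycles of length `j`. -/
noncomputable def cycNum {V : Type*} [Fintype V] (A : Matrix V V ℕ) (j : ℕ) : ℕ :=
  ∑ w : Fin j → Bool, ∑ v : Fin (j + 1) → V,
    if v (Fin.last j) = v 0 ∧
        Function.Injective (fun t : Fin j => sp (w t) (v t.castSucc) (v t.succ)) then
      ∏ t : Fin j,
        A (sp (w t) (v t.castSucc) (v t.succ)).1 (sp (w t) (v t.castSucc) (v t.succ)).2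
    else 0

/-- The number `c_j(A)` of plain cycles of length `j`, as a real number. -/
noncomputable def cReal {V : Type*} [Fintype V] (A : Matrix V V ℕ) (j : ℕ) : ℝ :=
  (cycNum A j : ℝ) / (2 * j)

/-- Toggle the four cells of the rectangle `{a,x} × {b,y}`. -/
def swB {n : ℕ} (a b x y : Fin n) (B : Fin n → Fin n → Bool) : Fin n → Fin n → Bool :=
  fun i j => if (i = a ∨ i = x) ∧ (j = b ∨ j = y) then !(B i j) else B i j

lemma swB_swB {n : ℕ} (a b x y : Fin n) (B : Fin n → Fin n → Bool) :
    swB a b x y (swB a b x y B) = B := by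
  funext i j
  unfold swB
  by_cases h : (i = a ∨ i = x) ∧ (j = b ∨ j = y) <;> simp [h]

/-- The switching conditions. -/
def GoodB {n : ℕ} (a b x y : Fin n) (B : Fin n → Fin n → Bool) : Prop :=
  B x y = true ∧ B a y = false ∧ B x b = false ∧ y ≠ a ∧ x ≠ b

lemma swB_reg {d n : ℕ} {a b x y : Fin n} {B : Fin n → Fin n → Bool}
    (hB : IsRegB d n B) (hab : B a b = true) (hg : GoodB a b x y B) :
    IsRegB d n (swB a b x y B) := by
  obtain ⟨h0, h1, h2⟩ := hB
  obtain ⟨g1, g2, g3, g4, g5⟩ := hg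
  have hax : a ≠ x := by rintro rfl; simp_all
  have hby : b ≠ y := by rintro rfl; simp_all
  refine ⟨fun i => ?_, fun i => ?_, fun j => ?_⟩
  · have := h0 i
    unfold swB
    split_ifs with h
    · obtain ⟨rfl | rfl, rfl | rfl⟩ := h <;> simp_all
    · exact this
  · by_cases hi : i = a ∨ i = x
    · rw [← h1 i]
      refine Finset.card_equiv (Equiv.swap b y) fun j => ?_
      simp only [Finset.mem_filter, Finset.mem_univ, true_and]
      unfold swB
      by_cases hjb : j = b
      · subst hjb
        rw [Equiv.swap_apply_left]
        rcases hi with rfl | rfl <;> simp_all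
      · by_cases hjy : j = y
        · subst hjy
          rw [Equiv.swap_apply_right]
          rcases hi with rfl | rfl <;> simp_all
        · rw [Equiv.swap_apply_of_ne_of_ne hjb hjy]
          simp [hjb, hjy]
    · rw [← h1 i]
      simp [swB, hi]
  · by_cases hj : j = b ∨ j = y
    · rw [← h2 j]
      refine Finset.card_equiv (Equiv.swap a x) fun i => ?_
      simp only [Finset.mem_filter, Finset.mem_univ, true_and]
      unfold swB
      by_cases hia : i = a
      · subst hia
        rw [Equiv.swap_apply_left]
        rcases hj with rfl | rfl <;> simp_all
      · by_cases hix : i = x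
        · subst hix
          rw [Equiv.swap_apply_right]
          rcases hj with rfl | rfl <;> simp_all
        · rw [Equiv.swap_apply_of_ne_of_ne hia hix]
          simp [hia, hix]
    · rw [← h2 j]
      simp [swB, hj]

lemma arcs_row {d n : ℕ} {B : Fin n → Fin n → Bool} (hB : IsRegB d n B)
    (s : Finset (Fin n)) :
    (Finset.univ.filter fun p : Fin n × Fin n => B p.1 p.2 = true ∧ p.1 ∈ s).card
      = s.card * d := by
  rw [Finset.card_filter, Fintype.sum_prod_type]
  have : ∀ x : Fin n, (∑ y : Fin n, if B x y = true ∧ x ∈ s then 1 else 0)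
      = if x ∈ s then d else 0 := by
    intro x
    by_cases hx : x ∈ s
    · simp only [hx, and_true, if_true]
      rw [← Finset.card_filter]; exact hB.2.1 x
    · simp [hx]
  simp only [this]
  simp

lemma arcs_col {d n : ℕ} {B : Fin n → Fin n → Bool} (hB : IsRegB d n B)
    (s : Finset (Fin n)) :
    (Finset.univ.filter fun p : Fin n × Fin n => B p.1 p.2 = true ∧ p.2 ∈ s).card
      = s.card * d := by
  rw [Finset.card_filter, Fintype.sum_prod_type_right]
  have : ∀ y : Fin n, (∑ x : Fin n, if B x y = true ∧ y ∈ s then 1 else 0)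
      = if y ∈ s then d else 0 := by
    intro x
    by_cases hx : x ∈ s
    · simp only [hx, and_true, if_true]
      rw [← Finset.card_filter]; exact hB.2.2 x
    · simp [hx]
  simp only [this]
  simp

open Classical in
lemma good_count {d n : ℕ} {B : Fin n → Fin n → Bool} (hB : IsRegB d n B) (a b : Fin n)
    (S : Finset (Fin n × Fin n)) :
    n * d ≤ (Finset.univ.filter fun p : Fin n × Fin n =>
      GoodB a b p.1 p.2 B ∧ p ∉ S).card + (S.card + (d * d + d * d + d + d)) := by
  have h := arcs_row hB Finset.univ
  have c1 := arcs_col hB (Finset.univ.filter fun y => B a y = true)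
  have c2 := arcs_row hB (Finset.univ.filter fun x => B x b = true)
  have c3 := arcs_col hB {a}
  have c4 := arcs_row hB {b}
  rw [hB.2.1 a] at c1
  rw [hB.2.2 b] at c2
  rw [Finset.card_singleton, one_mul] at c3 c4
  rw [Finset.card_univ, Fintype.card_fin] at h
  rw [← h]
  set G := Finset.univ.filter fun p : Fin n × Fin n => GoodB a b p.1 p.2 B ∧ p ∉ S with hG
  set C1 := Finset.univ.filter fun p : Fin n × Fin n => B p.1 p.2 = true ∧
    p.2 ∈ (Finset.univ.filter fun y => B a y = true) with hC1
  set C2 := Finset.univ.filter fun p : Fin n × Fin n => B p.1 p.2 = true ∧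
    p.1 ∈ (Finset.univ.filter fun x => B x b = true) with hC2
  set C3 := Finset.univ.filter fun p : Fin n × Fin n => B p.1 p.2 = true ∧
    p.2 ∈ ({a} : Finset (Fin n)) with hC3
  set C4 := Finset.univ.filter fun p : Fin n × Fin n => B p.1 p.2 = true ∧
    p.1 ∈ ({b} : Finset (Fin n)) with hC4
  have hsub : (Finset.univ.filter fun p : Fin n × Fin n => B p.1 p.2 = true ∧
      p.1 ∈ (Finset.univ : Finset (Fin n))) ⊆ G ∪ (S ∪ (C1 ∪ C2 ∪ C3 ∪ C4)) := by
    intro p hp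
    simp only [hG, hC1, hC2, hC3, hC4, Finset.mem_union, Finset.mem_filter,
      Finset.mem_univ, true_and, Finset.mem_singleton, and_true] at hp ⊢
    simp only [GoodB, hp, true_and, ← Bool.not_eq_true]
    tauto
  have k0 := Finset.card_le_card hsub
  have k1 := Finset.card_union_le G (S ∪ (C1 ∪ C2 ∪ C3 ∪ C4))
  have k2 := Finset.card_union_le S (C1 ∪ C2 ∪ C3 ∪ C4)
  have k3 := Finset.card_union_le (C1 ∪ C2 ∪ C3) C4
  have k4 := Finset.card_union_le (C1 ∪ C2) C3
  have k5 := Finset.card_union_le C1 C2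
  omega

open Classical in
/-- Regular digraphs containing all arcs of `S`. -/
noncomputable def regWith (d n : ℕ) (S : Finset (Fin n × Fin n)) :
    Finset (Fin n → Fin n → Bool) :=
  (regDigraphs d n).filter fun B => ∀ p ∈ S, B p.1 p.2 = true

lemma mem_regWith {d n : ℕ} {S : Finset (Fin n × Fin n)} {B : Fin n → Fin n → Bool} :
    B ∈ regWith d n S ↔ IsRegB d n B ∧ ∀ p ∈ S, B p.1 p.2 = true := by
  simp [regWith, regDigraphs]

open Classical in
lemma switch_bound {d n : ℕ} (S : Finset (Fin n × Fin n)) (a b : Fin n)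
    (hab : (a, b) ∉ S) (m : ℕ) (hm : m + (S.card + (d * d + d * d + d + d)) ≤ n * d) :
    (regWith d n (insert (a, b) S)).card * m ≤ (regWith d n S).card * (d * d) := by
  set L := (regWith d n (insert (a, b) S)).sigma fun B =>
    Finset.univ.filter fun p : Fin n × Fin n => GoodB a b p.1 p.2 B ∧ p ∉ S with hL
  set R := (regWith d n S).sigma fun B =>
    (Finset.univ.filter fun x => B x b = true) ×ˢ (Finset.univ.filter fun y => B a y = true)
    with hR
  have h1 : (regWith d n (insert (a, b) S)).card * m ≤ L.card := by
    rw [hL, Finset.card_sigma, ← smul_eq_mul]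
    refine Finset.card_nsmul_le_sum _ _ _ fun B hB => ?_
    have := good_count (mem_regWith.1 hB).1 a b S
    omega
  have h2 : R.card = (regWith d n S).card * (d * d) := by
    rw [hR, Finset.card_sigma, ← smul_eq_mul]
    refine Finset.sum_const_nat fun B hB => ?_
    have := (mem_regWith.1 hB).1
    rw [Finset.card_product, this.2.1 a, this.2.2 b]
  rw [← h2]
  refine h1.trans ?_
  refine Finset.card_le_card_of_injOn
    (fun q => ⟨swB a b q.2.1 q.2.2 q.1, q.2⟩) ?_ ?_
  · rintro ⟨B, x, y⟩ hq
    simp only [hL, Finset.coe_sigma, Set.mem_sigma_iff, Finset.mem_coe, mem_regWith,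
      Finset.mem_filter, Finset.mem_univ, true_and] at hq
    obtain ⟨⟨hB, hS⟩, hg, hxy⟩ := hq
    have hBab : B a b = true := hS (a, b) (Finset.mem_insert_self _ _)
    simp only [hR, Finset.coe_sigma, Set.mem_sigma_iff, Finset.mem_coe, mem_regWith,
      Finset.mem_filter, Finset.mem_univ, true_and, Finset.mem_product]
    refine ⟨⟨swB_reg hB hBab hg, ?_⟩, ?_, ?_⟩
    · rintro ⟨i, j⟩ hp
      have hBp : B i j = true := hS (i, j) (Finset.mem_insert_of_mem hp)
      obtain ⟨g1, g2, g3, g4, g5⟩ := hg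
      simp only [swB]
      split_ifs with h
      · obtain ⟨rfl | rfl, rfl | rfl⟩ := h <;> simp_all
      · exact hBp
    · simp [swB, hg.2.2.1]
    · simp [swB, hg.2.1]
  · rintro ⟨B, x, y⟩ _ ⟨B', x', y'⟩ _ h
    simp only [Sigma.mk.injEq, heq_eq_eq, Prod.mk.injEq] at h
    obtain ⟨h, rfl, rfl⟩ := h
    have := congrArg (swB a b x y) h
    rw [swB_swB, swB_swB] at this
    rw [this]

lemma regWith_bound {d n k : ℕ} (hd : 2 ≤ d) (hn : 2 * (k + (d * d + d * d + d + d)) ≤ n)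
    (S : Finset (Fin n × Fin n)) : S.card ≤ k →
    (regWith d n S).card * n ^ S.card ≤ (2 * d) ^ S.card * (regDigraphs d n).card := by
  classical
  induction S using Finset.induction_on with
  | empty => intro _; simp [regWith]
  | insert e S he ih =>
    intro hk
    rw [Finset.card_insert_of_notMem he] at hk ⊢
    have ih := ih (by omega)
    obtain ⟨a, b⟩ := e
    set C := k + (d * d + d * d + d + d) with hC
    have hnd : n * 2 ≤ n * d := Nat.mul_le_mul_left _ hd
    have h := switch_bound (d := d) S a b he (n * d - C) (by omega)
    set P := (regWith d n (insert (a, b) S)).card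
    set Q := (regWith d n S).card
    have h2 : n * d ≤ 2 * (n * d - C) := by omega
    have h3 : P * n * d ≤ (2 * d * Q) * d := by
      calc P * n * d = P * (n * d) := by ring
        _ ≤ P * (2 * (n * d - C)) := Nat.mul_le_mul_left _ h2
        _ = 2 * (P * (n * d - C)) := by ring
        _ ≤ 2 * (Q * (d * d)) := Nat.mul_le_mul_left _ h
        _ = _ := by ring
    have h4 : P * n ≤ 2 * d * Q := Nat.le_of_mul_le_mul_right h3 (by omega)
    calc P * n ^ (S.card + 1) = (P * n) * n ^ S.card := by ring
      _ ≤ (2 * d * Q) * n ^ S.card := Nat.mul_le_mul_right _ h4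
      _ = 2 * d * (Q * n ^ S.card) := by ring
      _ ≤ 2 * d * ((2 * d) ^ S.card * (regDigraphs d n).card) := Nat.mul_le_mul_left _ ih
      _ = _ := by ring

open Classical in
lemma closed_card (n k : ℕ) (hk : 1 ≤ k) :
    (Finset.univ.filter fun v : Fin (k + 1) → Fin n => v (Fin.last k) = v 0).card ≤ n ^ k := by
  have : n ^ k = (Finset.univ : Finset (Fin k → Fin n)).card := by simp
  rw [this]
  refine Finset.card_le_card_of_injOn (fun v t => v t.castSucc) (fun _ _ => by simp) ?_
  intro v hv v' hv' h
  simp only [Finset.coe_filter, Finset.mem_univ, true_and, Set.mem_ofPred_eq] at hv hv'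
  obtain ⟨k, rfl⟩ : ∃ m, k = m + 1 := ⟨k - 1, by omega⟩
  funext t
  refine Fin.lastCases ?_ (fun t => congrFun h t) t
  rw [hv, hv']
  exact congrFun h 0

lemma sum_cyc_bound {d n k : ℕ} (hd : 2 ≤ d) (hk : 1 ≤ k)
    (hn : 2 * (k + (d * d + d * d + d + d)) ≤ n) :
    ∑ B ∈ regDigraphs d n, cycNum (adjB B) k ≤ (4 * d) ^ k * (regDigraphs d n).card := by
  classical
  have hpos : 0 < n ^ k := pow_pos (by nlinarith) k
  refine Nat.le_of_mul_le_mul_left ?_ hpos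
  unfold cycNum
  rw [Finset.sum_comm, Finset.mul_sum]
  refine (Finset.sum_le_sum (g := fun _ => n ^ k * ((2 * d) ^ k * (regDigraphs d n).card))
    fun w _ => ?_).trans (le_of_eq ?_)
  · rw [Finset.sum_comm, Finset.mul_sum]
    calc _ ≤ ∑ v : Fin (k + 1) → Fin n, if v (Fin.last k) = v 0 then
          (2 * d) ^ k * (regDigraphs d n).card else 0 := by
          refine Finset.sum_le_sum fun v _ => ?_
          by_cases h1 : v (Fin.last k) = v 0
          · by_cases h2 : Function.Injective
                (fun t : Fin k => sp (w t) (v t.castSucc) (v t.succ))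
            · simp only [h1, h2, and_self, if_true]
              set f := fun t : Fin k => sp (w t) (v t.castSucc) (v t.succ) with hf
              have hc : (Finset.univ.image f).card = k := by
                rw [Finset.card_image_of_injective _ h2]; simp
              have := regWith_bound (k := k) hd hn (Finset.univ.image f) hc.le
              rw [hc] at this
              refine le_trans (le_of_eq ?_) this
              rw [mul_comm]
              congr 1
              rw [regWith, Finset.card_filter]
              refine Finset.sum_congr rfl fun B _ => ?_
              simp only [adjB, Finset.prod_boole]
              simp [hf]
            · simp [h2]
          · simp [h1]
      _ = (Finset.univ.filter fun v : Fin (k + 1) → Fin n => v (Fin.last k) = v 0).card *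
          ((2 * d) ^ k * (regDigraphs d n).card) := by
          rw [← Finset.sum_filter, Finset.sum_const, smul_eq_mul]
      _ ≤ _ := Nat.mul_le_mul_right _ (closed_card n k hk)
  · rw [Finset.sum_const, smul_eq_mul, Finset.card_univ, Fintype.card_fun, Fintype.card_bool,
      Fintype.card_fin, show 4 * d = 2 * (2 * d) by ring, mul_pow 2 (2 * d)]
    ring

open Filter in
/-- The uniform `d`-regular digraph has few short cycles on average:
`(1/n) E[c_k(G_{d,n})] → 0` as `n → ∞`. -/
theorem few_short_cycles_on_average (d k : ℕ) (hd : 2 ≤ d) (hk : 1 ≤ k) :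
    Tendsto
      (fun n : ℕ => ((regDigraphs d n).card : ℝ)⁻¹ *
        ∑ B ∈ regDigraphs d n, cReal (adjB B) k / n)
      atTop (nhds 0) := by
  have hlim := tendsto_const_div_atTop_nhds_zero_nat ((4 * d : ℝ) ^ k)
  refine tendsto_of_tendsto_of_tendsto_of_le_of_le' tendsto_const_nhds hlim ?_ ?_
  · refine Eventually.of_forall fun n => ?_
    unfold cReal
    positivity
  · filter_upwards [eventually_ge_atTop (2 * (k + (d * d + d * d + d + d)))] with n hn
    have h := sum_cyc_bound hd hk hn
    have h' : (∑ B ∈ regDigraphs d n, (cycNum (adjB B) k : ℝ)) ≤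
        (4 * d : ℝ) ^ k * (regDigraphs d n).card := by exact_mod_cast h
    have hk' : (1 : ℝ) ≤ k := by exact_mod_cast hk
    rw [← Finset.sum_div]
    have h2 : ∑ B ∈ regDigraphs d n, cReal (adjB B) k ≤
        (4 * d : ℝ) ^ k * (regDigraphs d n).card := by
      refine le_trans (Finset.sum_le_sum fun B _ => ?_) h'
      unfold cReal
      exact div_le_self (by positivity) (by linarith)
    rw [← mul_div_assoc]
    refine div_le_div_of_nonneg_right ?_ (by positivity)
    rcases Nat.eq_zero_or_pos (regDigraphs d n).card with h0 | h0
    · rw [h0]; simp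
    · rw [inv_mul_le_iff₀ (by exact_mod_cast h0)]
      linarith
end

section
/- Let G be a d-regular digraph with adjacency matrix A on a finite vertex set V, and let k ≥ 1. Let 𝒞_k(G) be the set of vertices v ∈ V for which there exist 0 ≤ j' ≤ k, a word w' ∈ Σ^{j'}, and a vertex v' with A^{w'}(v,v') ≥ 1 such that v' lies on a plain cycle of length at most k (i.e. there exist 1 ≤ j ≤ k, a word u ∈ Σ^j, and (u_0,…,u_j) ∈ V^{j+1} with u_0 = u_j = v', the sequence of signed pairs ((u_{i−1},u_i)^{u's letters})_{1≤i≤j} injective, and ∏_{i=1}^j A^{u_i}(u_{i−1},u_i) ≥ 1). Then |𝒞_k(G)| ≤ k²·(2d)^k·Σ_{j=1}^k c_j(G). -/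
/-- `A` is the adjacency matrix of a `d`-regular digraph. -/
def IsRegAdj {V : Type*} [Fintype V] (d : ℕ) (A : Matrix V V ℕ) : Prop :=
  (∀ i j, A i j ≤ 1) ∧ (∀ i, A i i = 0) ∧
  (∀ i, ∑ j, A i j = d) ∧ (∀ j, ∑ i, A i j = d)

/-- The vertex `v'` lies on a plain cycle of length at most `k`. -/
def OnCycle {V : Type*} [Fintype V] (A : Matrix V V ℕ) (k : ℕ) (v' : V) : Prop :=
  ∃ j, 1 ≤ j ∧ j ≤ k ∧ ∃ u : Fin j → Bool, ∃ c : Fin (j + 1) → V,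
    c 0 = v' ∧ c (Fin.last j) = v' ∧
    Function.Injective (fun t : Fin j => sp (u t) (c t.castSucc) (c t.succ)) ∧
    1 ≤ ∏ t : Fin j,
        A (sp (u t) (c t.castSucc) (c t.succ)).1 (sp (u t) (c t.castSucc) (c t.succ)).2

/-- `𝒞_k(G)`: the set of vertices `v` from which some vertex `v'` with
`A^{w'}(v,v') ≥ 1` for a word `w'` of length at most `k` lies on a plain cycle of
length at most `k`. -/
def CkSet {V : Type*} [Fintype V] [DecidableEq V] (A : Matrix V V ℕ) (k : ℕ) : Set V :=
  {v | ∃ j', j' ≤ k ∧ ∃ w' : Fin j' → Bool, ∃ v' : V, 1 ≤ wMat A w' v v' ∧ OnCycle A k v'}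

theorem colsum_prod {V : Type} [Fintype V] [DecidableEq V] (d : ℕ) (L : List (Matrix V V ℕ))
    (h : ∀ M ∈ L, ∀ j, ∑ i, M i j = d) (j : V) : ∑ i, L.prod i j = d ^ L.length := by
  induction L generalizing j with
  | nil => simp [Matrix.one_apply]
  | cons M L ih =>
    simp only [List.prod_cons, Matrix.mul_apply, List.length_cons]
    rw [Finset.sum_comm]
    simp_rw [← Finset.sum_mul]
    simp_rw [h M (by simp)]
    rw [← Finset.mul_sum, ih (fun M hM => h M (by simp [hM])), pow_succ, mul_comm]

theorem colsum_wMat {V : Type} [Fintype V] [DecidableEq V] (d : ℕ) (A : Matrix V V ℕ)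
    (hreg : IsRegAdj d A) {n : ℕ} (w : Fin n → Bool) (j : V) :
    ∑ i, wMat A w i j = d ^ n := by
  unfold wMat
  rw [colsum_prod d]
  · simp
  · intro M hM j
    rw [List.mem_ofFn] at hM
    obtain ⟨t, rfl⟩ := hM
    split_ifs
    · exact hreg.2.2.2 j
    · simpa using hreg.2.2.1 j

/-- `v'` lies on a plain cycle of length exactly `j`. -/
def OnCyc {V : Type} [Fintype V] (A : Matrix V V ℕ) (j : ℕ) (v' : V) : Prop :=
  ∃ u : Fin j → Bool, ∃ c : Fin (j + 1) → V,
    c 0 = v' ∧ c (Fin.last j) = v' ∧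
    Function.Injective (fun t : Fin j => sp (u t) (c t.castSucc) (c t.succ)) ∧
    1 ≤ ∏ t : Fin j,
        A (sp (u t) (c t.castSucc) (c t.succ)).1 (sp (u t) (c t.castSucc) (c t.succ)).2

theorem sp_rev {V : Type} {j : ℕ} (u : Fin j → Bool) (c : Fin (j + 1) → V) (t : Fin j) :
    sp (!u t.rev) (c t.castSucc.rev) (c t.succ.rev)
      = sp (u t.rev) (c t.rev.castSucc) (c t.rev.succ) := by
  rw [Fin.rev_castSucc, Fin.rev_succ]
  unfold sp
  cases u t.rev <;> simp

open Classical in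
theorem two_card_le {V : Type} [Fintype V] (A : Matrix V V ℕ) (j : ℕ) (hj : 1 ≤ j) :
    2 * (Finset.univ.filter (OnCyc A j)).card ≤ cycNum A j := by
  unfold cycNum
  rw [← Fintype.sum_prod_type']
  rw [← Finset.sum_fiberwise (s := Finset.univ)
    (g := fun p : (Fin j → Bool) × (Fin (j + 1) → V) => p.2 0)]
  rw [Finset.card_filter, Finset.mul_sum]
  apply Finset.sum_le_sum
  intro v' _
  split_ifs with h
  swap
  · simp
  obtain ⟨u, c, h0, hl, hinj, hprod⟩ := h
  have hrinj : Function.Injective (fun t : Fin j =>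
      sp (!u t.rev) (c t.castSucc.rev) (c t.succ.rev)) := by
    simp_rw [sp_rev]
    exact hinj.comp Fin.rev_injective
  have hrprod : ∏ t : Fin j, A (sp (!u t.rev) (c t.castSucc.rev) (c t.succ.rev)).1
      (sp (!u t.rev) (c t.castSucc.rev) (c t.succ.rev)).2 = ∏ t : Fin j,
        A (sp (u t) (c t.castSucc) (c t.succ)).1 (sp (u t) (c t.castSucc) (c t.succ)).2 := by
    simp_rw [sp_rev]
    exact Fintype.prod_equiv Fin.revPerm _ _ (fun t => rfl)
  have hne : ((u, c) : (Fin j → Bool) × (Fin (j + 1) → V)) ≠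
      (fun t => !u t.rev, fun t => c t.rev) := by
    intro he
    rw [Prod.mk.injEq] at he
    obtain ⟨h1, h2⟩ := he
    let z : Fin j := ⟨0, hj⟩
    have e1 := congrFun h1 z
    have e2 : z = z.rev := by
      apply hinj
      show sp (u z) (c z.castSucc) (c z.succ) = sp (u z.rev) (c z.rev.castSucc) (c z.rev.succ)
      rw [← sp_rev]
      rw [show (!u z.rev) = u z from e1.symm,
        show c z.castSucc.rev = c z.castSucc from (congrFun h2 _).symm,
        show c z.succ.rev = c z.succ from (congrFun h2 _).symm]
    simp only [← e2] at e1
    cases hh : u z <;> simp [hh] at e1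
  refine le_trans ?_ (Finset.sum_le_sum_of_subset (s := {(u, c), (fun t => !u t.rev, fun t => c t.rev)}) ?_)
  · rw [Finset.sum_pair hne]
    rw [if_pos ⟨hl.trans h0.symm, hinj⟩, if_pos ⟨by simp [h0, hl], hrinj⟩]
    simp only
    rw [hrprod]
    omega
  · intro p hp
    simp only [Finset.mem_insert, Finset.mem_singleton] at hp
    rcases hp with rfl | rfl <;> simp [h0, hl]

theorem ck_geom_le (d k : ℕ) (hd : 1 ≤ d) : 
    ∑ n ∈ Finset.range (k + 1), (2 * d) ^ n ≤ 2 * (2 * d) ^ k := by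
  induction k with
  | zero => simp
  | succ k ih =>
    rw [Finset.sum_range_succ]
    have : 2 * (2 * d) ^ k ≤ (2 * d) ^ (k + 1) := by
      rw [pow_succ, mul_comm]; gcongr; omega
    omega

open Classical in
theorem card_Ck_nat {V : Type} [Fintype V] [DecidableEq V] (d k : ℕ)
    (A : Matrix V V ℕ) (hreg : IsRegAdj d A) :
    Nat.card ↥(CkSet A k) ≤ (∑ n ∈ Finset.range (k + 1), (2 * d) ^ n) *
      ∑ j ∈ Finset.Icc 1 k, (Finset.univ.filter (OnCyc A j)).card := by
  have hsub : (Finset.univ.filter (· ∈ CkSet A k)) ⊆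
      (Finset.Icc 1 k).biUnion fun j => (Finset.univ.filter (OnCyc A j)).biUnion fun v' =>
        (Finset.range (k + 1)).biUnion fun n => (Finset.univ : Finset (Fin n → Bool)).biUnion
          fun w => Finset.univ.filter fun v => 1 ≤ wMat A w v v' := by
    intro v hv
    simp only [Finset.mem_filter, Finset.mem_univ, true_and] at hv
    obtain ⟨n, hn, w, v', hw, j, h1, h2, hc⟩ := hv
    simp only [Finset.mem_biUnion, Finset.mem_filter, Finset.mem_univ, true_and,
      Finset.mem_range, Finset.mem_Icc]
    exact ⟨j, ⟨h1, h2⟩, v', hc, n, by omega, w, hw⟩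
  have hc : Nat.card ↥(CkSet A k) = (Finset.univ.filter (· ∈ CkSet A k)).card := by
    rw [Nat.card_eq_fintype_card, Fintype.card_subtype]
  rw [hc, Finset.mul_sum]
  refine (Finset.card_le_card hsub).trans (Finset.card_biUnion_le.trans ?_)
  refine Finset.sum_le_sum fun j _ => ?_
  rw [mul_comm]
  refine Finset.card_biUnion_le_card_mul _ _ _ fun v' _ => ?_
  refine Finset.card_biUnion_le.trans (Finset.sum_le_sum fun n _ => ?_)
  refine (Finset.card_biUnion_le_card_mul _ _ (d ^ n) fun w _ => ?_).trans ?_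
  · rw [← colsum_wMat d A hreg w v', Finset.card_filter]
    refine Finset.sum_le_sum fun v _ => ?_
    split_ifs <;> omega
  · simp [mul_pow]

theorem not_onCycle_of_le_one {V : Type} [Fintype V] (d k : ℕ)
    (A : Matrix V V ℕ) (hreg : IsRegAdj d A) (h : k ≤ 1 ∨ d = 0) (v' : V) : ¬ OnCycle A k v' := by
  rintro ⟨j, h1, h2, u, c, h0, hl, hinj, hp⟩
  rcases h with h | rfl
  · obtain rfl : j = 1 := by omega
    have e : c 1 = v' := hl
    cases hu : u 0 <;> simp [sp, hu, h0, e, hreg.2.1] at hp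
  · have hA : ∀ i j, A i j = 0 := by
      intro i j
      have := hreg.2.2.1 i
      rw [Finset.sum_eq_zero_iff] at this
      exact this j (Finset.mem_univ _)
    simp only [hA, Finset.prod_const, Finset.card_univ, Fintype.card_fin] at hp
    rw [zero_pow (by omega)] at hp
    omega

/-- The number of vertices within distance `k` of a short plain cycle is at most
`k² (2d)^k Σ_{j=1}^k c_j(G)`. -/
theorem card_CkSet_le (d k : ℕ) {V : Type} [Fintype V] [DecidableEq V]
    (A : Matrix V V ℕ) (hreg : IsRegAdj d A) (hk : 1 ≤ k) :
    (Nat.card ↥(CkSet A k) : ℝ) ≤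
      (k : ℝ) ^ 2 * (2 * d : ℝ) ^ k * ∑ j ∈ Finset.Icc 1 k, (cycNum A j : ℝ) / (2 * j) := by
  classical
  by_cases h : k ≤ 1 ∨ d = 0
  · have : CkSet A k = ∅ := by
      ext v
      simp only [Set.mem_empty_iff_false, iff_false]
      rintro ⟨_, _, _, v', _, hv⟩
      exact not_onCycle_of_le_one d k A hreg h v' hv
    rw [this]
    simp only [Nat.card_eq_fintype_card, Fintype.card_of_isEmpty, Nat.cast_zero]
    positivity
  · push Not at h
    have h1 := card_Ck_nat d k A hreg
    have h2 : (∑ n ∈ Finset.range (k + 1), (2 * d) ^ n) ≤ k * (2 * d) ^ k :=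
      (ck_geom_le d k (by omega)).trans (by gcongr; omega)
    have h3 := h1.trans (Nat.mul_le_mul_right _ h2)
    have h4 : (Nat.card ↥(CkSet A k) : ℝ) ≤ (k * (2 * d) ^ k) *
        ∑ j ∈ Finset.Icc 1 k, ((Finset.univ.filter (OnCyc A j)).card : ℝ) := by exact_mod_cast h3
    refine h4.trans ?_
    rw [show (k : ℝ) ^ 2 * (2 * d : ℝ) ^ k * ∑ j ∈ Finset.Icc 1 k, (cycNum A j : ℝ) / (2 * j)
      = (k * (2 * d) ^ k) * (k * ∑ j ∈ Finset.Icc 1 k, (cycNum A j : ℝ) / (2 * j)) by ring]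
    refine mul_le_mul_of_nonneg_left ?_ (by positivity)
    rw [Finset.mul_sum]
    refine Finset.sum_le_sum fun j hj => ?_
    rw [Finset.mem_Icc] at hj
    have h5 : (2 * (Finset.univ.filter (OnCyc A j)).card : ℝ) ≤ cycNum A j := by
      exact_mod_cast two_card_le A j hj.1
    have hj0 : (0 : ℝ) < j := by exact_mod_cast hj.1
    have hjk : (j : ℝ) ≤ k := by exact_mod_cast hj.2
    calc ((Finset.univ.filter (OnCyc A j)).card : ℝ) ≤ (cycNum A j : ℝ) / 2 := by linarith
      _ = j * ((cycNum A j : ℝ) / (2 * j)) := by field_simp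
      _ ≤ k * ((cycNum A j : ℝ) / (2 * j)) := by gcongr
end

section
/- Let G be a d-regular digraph (d ≥ 2) with adjacency matrix A on a finite vertex set V, let k ≥ 1, and let v ∈ V be a vertex not in 𝒞_k(G), i.e. no vertex v' reachable from v by some word w' ∈ Σ^{j'} with j' ≤ k and A^{w'}(v,v') ≥ 1 lies on a plain cycle of length at most k. Then for every word w ∈ Σ^k, the diagonal entry A^w(v,v) equals M_d(w), the number of w-paths in the free group F_d. -/
/-- Decomposition of a regular nonnegative integer matrix as a sum of permutations. -/
lemma perm_decomp {V : Type} [Fintype V] [DecidableEq V] (d : ℕ) : ∀ (A : Matrix V V ℕ),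
    (∀ i, ∑ j, A i j = d) → (∀ j, ∑ i, A i j = d) →
    ∃ σ : Fin d → Equiv.Perm V, ∀ x y, A x y = ∑ i, if x = σ i y then 1 else 0 := by
  induction d with
  | zero =>
    intro A h1 h2
    refine ⟨fun i => i.elim0, fun x y => ?_⟩
    have := h1 x
    rw [Finset.sum_eq_zero_iff] at this
    simpa using this y (Finset.mem_univ y)
  | succ d ih =>
    intro A h1 h2
    have hd0 : ((d : ℚ) + 1) ≠ 0 := by positivity
    have hM : (Matrix.of fun i j => (A j i : ℚ) / ((d : ℚ) + 1)) ∈ doublyStochastic ℚ V := by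
      rw [mem_doublyStochastic_iff_sum]
      refine ⟨fun i j => by simp only [Matrix.of_apply]; positivity, fun i => ?_, fun j => ?_⟩
      · simp only [Matrix.of_apply]
        rw [← Finset.sum_div, div_eq_one_iff_eq hd0]
        exact_mod_cast h2 i
      · simp only [Matrix.of_apply]
        rw [← Finset.sum_div, div_eq_one_iff_eq hd0]
        exact_mod_cast h1 j
    obtain ⟨wt, hw0, hw1, hw⟩ := exists_eq_sum_perm_of_mem_doublyStochastic hM
    obtain ⟨τ, hτ⟩ : ∃ τ, 0 < wt τ := by
      by_contra! hcon
      have : ∑ σ, wt σ ≤ 0 := Finset.sum_nonpos fun i _ => hcon i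
      rw [hw1] at this
      norm_num at this
    have hpos : ∀ y, 1 ≤ A (τ y) y := by
      intro y
      have h := congrFun (congrFun hw y) (τ y)
      rw [Matrix.sum_apply] at h
      have h3 : wt τ ≤ ∑ c, (wt c • c.permMatrix ℚ) y (τ y) := by
        have := Finset.single_le_sum (f := fun c : Equiv.Perm V => (wt c • c.permMatrix ℚ) y (τ y))
          (fun c _ => by
            simp only [Matrix.smul_apply, smul_eq_mul, Equiv.Perm.permMatrix,
              PEquiv.toMatrix_apply]
            have := hw0 c
            split_ifs <;> simp [this]) (Finset.mem_univ τ)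
        simpa [Equiv.Perm.permMatrix, PEquiv.toMatrix_apply] using this
      rw [h] at h3
      by_contra hlt
      have h0 : A (τ y) y = 0 := by omega
      simp only [Matrix.of_apply, h0] at h3
      norm_num at h3
      linarith
    have hle : ∀ x y, (if x = τ y then 1 else 0) ≤ A x y := by
      intro x y
      split_ifs with h
      · rw [h]; exact hpos y
      · exact Nat.zero_le _
    obtain ⟨σ, hσ⟩ := ih (fun x y => A x y - if x = τ y then 1 else 0)
      (fun i => by
        rw [Finset.sum_tsub_distrib _ (fun y _ => hle i y), h1]
        have : ∀ y, (i = τ y) ↔ (τ.symm i = y) := fun y => by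
          rw [Equiv.symm_apply_eq]
        simp [this])
      (fun j => by
        rw [Finset.sum_tsub_distrib _ (fun x _ => hle x j), h2]
        simp)
    refine ⟨Fin.cons τ σ, fun x y => ?_⟩
    have := hσ x y
    have h' := hle x y
    rw [Fin.sum_univ_succ]
    simp only [Fin.cons_zero, Fin.cons_succ]
    rw [← this]
    omega

lemma wMat_formula {V : Type} [Fintype V] [DecidableEq V] {d : ℕ} (A : Matrix V V ℕ)
    (σ : Fin d → Equiv.Perm V) (hσ : ∀ x y, A x y = ∑ i, if x = σ i y then 1 else 0) (k : ℕ) :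
    ∀ (w : Fin k → Bool) (x y : V), wMat A w x y =
      ∑ i : Fin k → Fin d, if x = FreeGroup.lift σ (wprod w i) y then 1 else 0 := by
  induction k with
  | zero =>
    intro w x y
    simp [wMat, wprod, Matrix.one_apply]
  | succ k ih =>
    intro w x y
    have hstep : wMat A w = (if w 0 then A else A.transpose) * wMat A (fun t => w t.succ) := by
      simp [wMat, List.ofFn_succ]
    have hB : ∀ x y, (if w 0 then A else A.transpose) x y =
        ∑ i, if x = FreeGroup.lift σ (gens d (w 0) i) y then 1 else 0 := by
      intro x y
      cases w 0
      · simp only [gens, Bool.false_eq_true, if_false, Matrix.transpose_apply, hσ, map_inv,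
          FreeGroup.lift_apply_of]
        refine Finset.sum_congr rfl fun i _ => ?_
        have : (y = σ i x) ↔ (x = (σ i)⁻¹ y) := by
          rw [Equiv.Perm.eq_inv_iff_eq, eq_comm]
        simp only [this]
      · simp [gens, hσ]
    rw [hstep, Matrix.mul_apply, ← (Fin.consEquiv fun _ => Fin d).sum_comp, Fintype.sum_prod_type]
    simp only [hB, ih, Finset.sum_mul_sum]
    rw [Finset.sum_comm]
    refine Finset.sum_congr rfl fun a _ => ?_
    rw [Finset.sum_comm]
    refine Finset.sum_congr rfl fun f _ => ?_
    have hp : wprod w (Fin.cons a f : Fin (k+1) → Fin d) =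
        gens d (w 0) a * wprod (fun t => w t.succ) f := by
      simp [wprod, List.ofFn_succ]
    have : (Fin.consEquiv fun _ => Fin d) (a, f) = (Fin.cons a f : Fin (k+1) → Fin d) := rfl
    rw [this, hp, map_mul, Equiv.Perm.mul_apply]
    rw [Finset.sum_eq_single (FreeGroup.lift σ (wprod (fun t => w t.succ) f) y)]
    · simp
    · intro b _ hb
      simp [hb]
    · simp

lemma wprod_eq_mk {d k : ℕ} (w : Fin k → Bool) (i : Fin k → Fin d) :
    wprod w i = FreeGroup.mk (List.ofFn fun t => (i t, w t)) := by
  induction k with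
  | zero => simp [wprod, FreeGroup.one_eq_mk]
  | succ k ih =>
    have := ih (fun t => w t.succ) (fun t => i t.succ)
    have hp : wprod w i = gens d (w 0) (i 0) * wprod (fun t => w t.succ) (fun t => i t.succ) := by
      simp [wprod, List.ofFn_succ]
    have hg : gens d (w 0) (i 0) = FreeGroup.mk [(i 0, w 0)] := by
      cases h : w 0
      · simp [gens, FreeGroup.of, FreeGroup.inv_mk, FreeGroup.invRev]
      · simp [gens, FreeGroup.of]
    rw [hp, this, hg, FreeGroup.mul_mk, List.ofFn_succ]
    rfl

lemma main_reduced {V : Type} [Fintype V] [DecidableEq V] {d k : ℕ} (A : Matrix V V ℕ)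
    (hA : ∀ x y, A x y ≤ 1)
    (σ : Fin d → Equiv.Perm V) (hσ : ∀ x y, A x y = ∑ i, if x = σ i y then 1 else 0)
    (v : V) (L : List (Fin d × Bool)) (hL : FreeGroup.IsReduced L) (hne : L ≠ [])
    (hlen : L.length ≤ k) (hfix : FreeGroup.lift σ (FreeGroup.mk L) v = v) : v ∈ CkSet A k := by
  have hedge : ∀ i y, 1 ≤ A (σ i y) y := by
    intro i y
    rw [hσ]
    have := Finset.single_le_sum (f := fun j => if σ i y = σ j y then 1 else 0)
      (fun _ _ => Nat.zero_le _) (Finset.mem_univ i)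
    simpa using this
  have huniq : ∀ i j y, σ i y = σ j y → i = j := by
    intro i j y h
    by_contra hij
    have h1 := hA (σ i y) y
    rw [hσ] at h1
    have h2 := Finset.sum_le_sum_of_subset (f := fun l => if σ i y = σ l y then 1 else 0)
      (Finset.subset_univ ({i, j} : Finset (Fin d)))
    rw [Finset.sum_pair hij] at h2
    simp only [if_true, if_pos h] at h2
    omega
  let u : ℕ → V := fun t => FreeGroup.lift σ (FreeGroup.mk (L.drop t)) v
  have hu0 : u 0 = v := by simpa [u] using hfix
  have hun : u L.length = v := by
    simp only [u, List.drop_length, ← FreeGroup.one_eq_mk, map_one, Equiv.Perm.one_apply]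
  have hstep : ∀ t (ht : t < L.length),
      u t = (if L[t].2 then σ L[t].1 else (σ L[t].1)⁻¹) (u (t+1)) := by
    intro t ht
    have : FreeGroup.mk (L.drop t) = FreeGroup.mk [L[t]] * FreeGroup.mk (L.drop (t+1)) := by
      rw [FreeGroup.mul_mk, List.drop_eq_getElem_cons ht]; rfl
    simp only [u, this, map_mul, Equiv.Perm.mul_apply]
    congr 1
    rw [FreeGroup.lift_mk]
    cases h : L[t].2 <;> simp [h]
  have hstepT : ∀ t (ht : t < L.length), L[t].2 = true → u t = σ L[t].1 (u (t+1)) := by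
    intro t ht h
    have := hstep t ht
    rwa [if_pos h] at this
  have hstepF : ∀ t (ht : t < L.length), L[t].2 = false → u (t+1) = σ L[t].1 (u t) := by
    intro t ht h
    have := hstep t ht
    rw [if_neg (by simp [h]), Equiv.Perm.eq_inv_iff_eq] at this
    exact this.symm
  have hpos : 0 < L.length := List.length_pos_iff.mpr hne
  have hex : ∃ m, 1 ≤ m ∧ ∃ a, a + m ≤ L.length ∧ u a = u (a + m) :=
    ⟨L.length, hpos, 0, by omega, by rw [hu0, zero_add, hun]⟩
  classical
  obtain ⟨hm1, a, ham, hau⟩ := Nat.find_spec hex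
  have hmin : ∀ m', m' < Nat.find hex → ¬ _ := fun m' h => Nat.find_min hex h
  generalize Nat.find hex = m at *
  have hmin' : ∀ s t, s < t → t ≤ L.length → t - s < m → u s ≠ u t := by
    intro s t hst htn hlt heq
    refine hmin (t - s) hlt ⟨by omega, s, by omega, ?_⟩
    rwa [Nat.add_sub_cancel' hst.le]
  have hinj : ∀ s t, a ≤ s → ∀ (_ : s < t) (_ : t < a + m),
      sp (L[s]'(by omega)).2 (u s) (u (s+1)) ≠ sp (L[t]'(by omega)).2 (u t) (u (t+1)) := by
    intro s t has hst ht heq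
    have hsL : s < L.length := by omega
    have htL : t < L.length := by omega
    have hdiff : u s = u (t+1) → u (s+1) = u t → L[s].2 ≠ L[t].2 → False := by
      intro e1 e2 hne2
      have hsa : s = a ∧ t + 1 = a + m := by
        by_contra hc
        exact hmin' s (t+1) (by omega) (by omega) (by omega) e1
      have ht1 : t = s + 1 := by
        by_contra hc
        exact hmin' (s+1) t (by omega) (by omega) (by omega) e2
      subst ht1
      have hch := List.isChain_iff_getElem.mp hL s (by omega)
      apply hne2
      apply hch
      cases hs : L[s].2
      · have ht2 : L[s+1].2 = true := by
          cases h : L[s+1].2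
          · exact absurd (hs.trans h.symm) hne2
          · rfl
        have h1 := hstepF s hsL hs
        have h2 := hstepT (s+1) htL ht2
        rw [← e1] at h2
        exact huniq _ _ _ (h1.symm.trans h2)
      · have ht2 : L[s+1].2 = false := by
          cases h : L[s+1].2
          · rfl
          · exact absurd (hs.trans h.symm) hne2
        have h1 := hstepT s hsL hs
        have h2 := hstepF (s+1) htL ht2
        rw [← e1] at h2
        exact huniq _ _ _ (h1.symm.trans h2)
    have hsame := hmin' s t hst (by omega) (by omega)
    cases hs : L[s].2 <;> cases ht2 : L[t].2 <;>
      simp only [sp, hs, ht2, if_true, Bool.false_eq_true, if_false, Prod.mk.injEq] at heq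
    · exact hsame heq.2
    · exact hdiff heq.2 heq.1 (by simp [hs, ht2])
    · exact hdiff heq.1 heq.2 (by simp [hs, ht2])
    · exact hsame heq.1
  refine ⟨a, by omega, fun t => (L[(t : ℕ)]'(by omega)).2, u a, ?_, m, hm1, by omega,
    fun t => (L[a + (t : ℕ)]'(by omega)).2, fun t => u (a + t), by simp, by simp [← hau], ?_, ?_⟩
  · rw [wMat_formula A σ hσ]
    have := Finset.single_le_sum
      (f := fun i => if v = FreeGroup.lift σ
        (wprod (fun t : Fin a => (L[(t : ℕ)]'(by omega)).2) i) (u a) then 1 else 0)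
      (fun _ _ => Nat.zero_le _) (Finset.mem_univ (fun t : Fin a => (L[(t : ℕ)]'(by omega)).1))
    refine le_trans ?_ this
    have hof : (List.ofFn fun t : Fin a => (L[(t : ℕ)]'(by omega))) = L.take a := by
      apply List.ext_getElem
      · simp; omega
      · intro i h1 h2
        simp
    have hv : v = FreeGroup.lift σ
        (wprod (fun t : Fin a => (L[(t : ℕ)]'(by omega)).2)
          (fun t : Fin a => (L[(t : ℕ)]'(by omega)).1)) (u a) := by
      rw [wprod_eq_mk]
      simp only [Prod.mk.eta, hof, u]
      rw [← Equiv.Perm.mul_apply, ← map_mul, FreeGroup.mul_mk, List.take_append_drop, hfix]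
    rw [if_pos hv]
  · intro s t hst
    simp only [Fin.val_castSucc, Fin.val_succ, ← add_assoc] at hst
    rcases lt_trichotomy (s : ℕ) t with h | h | h
    · exact absurd hst (hinj _ _ (by omega) (by omega) (by omega))
    · exact Fin.ext h
    · exact absurd hst.symm (hinj _ _ (by omega) (by omega) (by omega))
  · apply Nat.one_le_iff_ne_zero.mpr
    rw [Finset.prod_ne_zero_iff]
    intro t _
    simp only [Fin.val_castSucc, Fin.val_succ, ← add_assoc]
    have htL : a + (t : ℕ) < L.length := by omega
    apply Nat.one_le_iff_ne_zero.mp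
    cases h : L[a + (t : ℕ)].2
    · have := hstepF _ htL h
      simp only [sp, Bool.false_eq_true, if_false]
      rw [this]
      exact hedge _ _
    · have := hstepT _ htL h
      simp only [sp, if_true]
      rw [this]
      exact hedge _ _

/-- If the radius-`k` neighbourhood of `v` is tree-like (`v ∉ 𝒞_k(G)`), then the
diagonal entry `A^w(v,v)` agrees with the corresponding count `M_d(w)` of `w`-paths in
the `d`-regular directed tree. -/
theorem treelike_diagonal_entry (d k : ℕ) (hd : 2 ≤ d) (hk : 1 ≤ k) {V : Type}
    [Fintype V] [DecidableEq V] (A : Matrix V V ℕ) (hreg : IsRegAdj d A)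
    (v : V) (hv : v ∉ CkSet A k) :
    ∀ w : Fin k → Bool, wMat A w v v = Mword d w := by
  intro w
  obtain ⟨hA, _, h1, h2⟩ := hreg
  obtain ⟨σ, hσ⟩ := perm_decomp d A h1 h2
  rw [wMat_formula A σ hσ, Mword, Nat.card_eq_fintype_card, Fintype.card_subtype,
    Finset.card_filter]
  refine Finset.sum_congr rfl fun i _ => ?_
  have : (v = FreeGroup.lift σ (wprod w i) v) ↔ wprod w i = 1 := by
    constructor
    · intro h
      by_contra hne
      refine hv (main_reduced A hA σ hσ v (wprod w i).toWord FreeGroup.isReduced_toWord ?_ ?_ ?_)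
      · rwa [Ne, FreeGroup.toWord_eq_nil_iff]
      · rw [wprod_eq_mk]
        refine (FreeGroup.norm_mk_le (L₁ := List.ofFn fun t => (i t, w t))).trans ?_
        simp
      · rw [FreeGroup.mk_toWord]; exact h.symm
    · intro h
      simp [h]
  simp only [this]
end
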